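/- Let λ > 0 and assume h is nonnegative and convex and satisfies the stated limit conditions. Then the modified functional Î attains its infimum over 𝒜_λ: there exists r* ∈ 𝒜_λ with Î(r*) ≤ Î(r) for all r ∈ 𝒜_λ, and inf_{𝒜_λ} Î is a real number. -/

import Mathlib

open Real MeasureTheory Filter Set
open scoped ENNReal NNReal

noncomputable section

/-- Radial stored energy `Φ(q, v, …, v) = (κ/n)(qⁿ + (n−1)vⁿ) + h(q v^{n−1})`,
the restriction of `Φ(v₁,…,vₙ) = (κ/n)(v₁ⁿ+⋯+vₙⁿ) + h(v₁⋯vₙ)` to points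
`(q, v, …, v)`. -/
def Phi (n : ℕ) (κ : ℝ) (h : ℝ → ℝ) (q v : ℝ) : ℝ :=
  (κ / n) * (q ^ n + ((n : ℝ) - 1) * v ^ n) + h (q * v ^ (n - 1))

/-- `Φ_{,1}(q, v, …, v) = κ q^{n−1} + v^{n−1} h'(q v^{n−1})`. -/
def Phi1 (n : ℕ) (κ : ℝ) (h' : ℝ → ℝ) (q v : ℝ) : ℝ :=
  κ * q ^ (n - 1) + v ^ (n - 1) * h' (q * v ^ (n - 1))

/-- `Φ_{,2}(q, v, …, v) = κ v^{n−1} + q v^{n−2} h'(q v^{n−1})`. -/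
def Phi2 (n : ℕ) (κ : ℝ) (h' : ℝ → ℝ) (q v : ℝ) : ℝ :=
  κ * v ^ (n - 1) + q * v ^ (n - 2) * h' (q * v ^ (n - 1))

/-- Radial Cauchy stress `T(q,v) = v^{1−n} Φ_{,1}(q,v,…,v) = κ(q/v)^{n−1} + h'(q v^{n−1})`. -/
def Tstress (n : ℕ) (κ : ℝ) (h' : ℝ → ℝ) (q v : ℝ) : ℝ :=
  κ * (q / v) ^ (n - 1) + h' (q * v ^ (n - 1))

/-- The determinant function `δ(R) = r'(R) (r(R)/R)^{n−1}`. -/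
def del (n : ℕ) (r r' : ℝ → ℝ) (R : ℝ) : ℝ :=
  r' R * (r R / R) ^ (n - 1)

/-- Hypotheses on `h : (0,∞) → [0,∞)`: it is `C²` with derivative `h'` and second
derivative `h''`, `h'' > 0`, `h(d) → ∞` as `d → 0⁺`, `h(d)/d → ∞` as `d → ∞`,
`h'(d) → −∞` as `d → 0⁺` and `h'(d) → ∞` as `d → ∞`. -/
structure GoodH (h h' h'' : ℝ → ℝ) : Prop where
  nonneg : ∀ d : ℝ, 0 < d → 0 ≤ h d
  deriv1 : ∀ d : ℝ, 0 < d → HasDerivAt h (h' d) d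
  deriv2 : ∀ d : ℝ, 0 < d → HasDerivAt h' (h'' d) d
  cont2 : ContinuousOn h'' (Set.Ioi 0)
  hpp_pos : ∀ d : ℝ, 0 < d → 0 < h'' d
  lim_zero : Tendsto h (nhdsWithin 0 (Set.Ioi 0)) atTop
  lim_growth : Tendsto (fun d => h d / d) atTop atTop
  dlim_zero : Tendsto h' (nhdsWithin 0 (Set.Ioi 0)) atBot
  dlim_top : Tendsto h' atTop atTop

/-- `r ∈ C²((0,1])`, with `r, r' > 0` on `(0,1]`, solving the radial equilibrium
equation `(d/dR)[R^{n−1} Φ_{,1}(r(R))] = (n−1) R^{n−2} Φ_{,2}(r(R))`. -/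
structure RadialSol (n : ℕ) (κ : ℝ) (h' : ℝ → ℝ) (r r' r'' : ℝ → ℝ) : Prop where
  pos : ∀ R ∈ Set.Ioc (0:ℝ) 1, 0 < r R
  derivPos : ∀ R ∈ Set.Ioc (0:ℝ) 1, 0 < r' R
  hasDeriv : ∀ R ∈ Set.Ioc (0:ℝ) 1, HasDerivWithinAt r (r' R) (Set.Ioc 0 1) R
  hasDeriv2 : ∀ R ∈ Set.Ioc (0:ℝ) 1, HasDerivWithinAt r' (r'' R) (Set.Ioc 0 1) R
  cont2 : ContinuousOn r'' (Set.Ioc 0 1)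
  equil : ∀ R ∈ Set.Ioc (0:ℝ) 1,
    HasDerivWithinAt (fun s => s ^ (n - 1) * Phi1 n κ h' (r' s) (r s / s))
      (((n : ℝ) - 1) * R ^ (n - 2) * Phi2 n κ h' (r' R) (r R / R)) (Set.Ioc 0 1) R


/-- Modified radial stored energy
`Φ̂(q,v,…,v) = (κ/n)qⁿ + h(q v^{n−1}) + κ q v^{n−1}((n−1)/n + ln(v^{n−1}))`. -/
def PhiHat (n : ℕ) (κ : ℝ) (h : ℝ → ℝ) (q v : ℝ) : ℝ :=
  (κ / n) * q ^ n + h (q * v ^ (n - 1)) +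
    κ * (q * v ^ (n - 1)) * (((n : ℝ) - 1) / n + ((n : ℝ) - 1) * Real.log v)

/-- `Φ̂_{,1}(q,v,…,v) = κ q^{n−1} + v^{n−1} h'(q v^{n−1}) + κ v^{n−1}((n−1)/n + (n−1) ln v)`. -/
def PhiHat1 (n : ℕ) (κ : ℝ) (h' : ℝ → ℝ) (q v : ℝ) : ℝ :=
  κ * q ^ (n - 1) + v ^ (n - 1) * h' (q * v ^ (n - 1)) +
    κ * v ^ (n - 1) * (((n : ℝ) - 1) / n + ((n : ℝ) - 1) * Real.log v)

/-- `Φ̂_{,2}(q,v,…,v) = q v^{n−2}(h'(q v^{n−1}) + κ + κ(n−1)(1/n + ln v))`. -/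
def PhiHat2 (n : ℕ) (κ : ℝ) (h' : ℝ → ℝ) (q v : ℝ) : ℝ :=
  q * v ^ (n - 2) *
    (h' (q * v ^ (n - 1)) + κ + κ * (((n : ℝ) - 1) * (1 / n + Real.log v)))

/-- Modified radial Cauchy stress
`T̂(q,v) = κ(q/v)^{n−1} + h'(q v^{n−1}) + (n−1)κ(1/n + ln v)`. -/
def THat (n : ℕ) (κ : ℝ) (h' : ℝ → ℝ) (q v : ℝ) : ℝ :=
  κ * (q / v) ^ (n - 1) + h' (q * v ^ (n - 1)) +
    ((n : ℝ) - 1) * κ * (1 / n + Real.log v)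

/-- `r ∈ C²((0,1])`, with `r, r' > 0` on `(0,1]`, solving the modified radial
equilibrium equation `(d/dR)[R^{n−1} Φ̂_{,1}(r(R))] = (n−1) R^{n−2} Φ̂_{,2}(r(R))`. -/
structure ModRadialSol (n : ℕ) (κ : ℝ) (h' : ℝ → ℝ) (r r' r'' : ℝ → ℝ) : Prop where
  pos : ∀ R ∈ Set.Ioc (0:ℝ) 1, 0 < r R
  derivPos : ∀ R ∈ Set.Ioc (0:ℝ) 1, 0 < r' R
  hasDeriv : ∀ R ∈ Set.Ioc (0:ℝ) 1, HasDerivWithinAt r (r' R) (Set.Ioc 0 1) R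
  hasDeriv2 : ∀ R ∈ Set.Ioc (0:ℝ) 1, HasDerivWithinAt r' (r'' R) (Set.Ioc 0 1) R
  cont2 : ContinuousOn r'' (Set.Ioc 0 1)
  equil : ∀ R ∈ Set.Ioc (0:ℝ) 1,
    HasDerivWithinAt (fun s => s ^ (n - 1) * PhiHat1 n κ h' (r' s) (r s / s))
      (((n : ℝ) - 1) * R ^ (n - 2) * PhiHat2 n κ h' (r' R) (r R / R)) (Set.Ioc 0 1) R


/-- The admissible set `𝒜_λ`: `r ∈ W^{1,1}(0,1)` (absolutely continuous with
integrable derivative `r'`), `r(1) = λ`, `r' > 0` a.e. in `(0,1)` and `r(0) ≥ 0`. -/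
structure Adm (lam : ℝ) (r r' : ℝ → ℝ) : Prop where
  intg : IntegrableOn r' (Set.Ioc 0 1)
  ftc : ∀ R ∈ Set.Icc (0:ℝ) 1, r R = r 0 + ∫ t in Set.Ioc 0 R, r' t
  derivPos : ∀ᵐ R ∂(volume.restrict (Set.Ioc (0:ℝ) 1)), 0 < r' R
  bc : r 1 = lam
  c0 : 0 ≤ r 0

/-- The modified energy functional `Î`, valued in `EReal` (it is the integral of
`R^{n−1} Φ̂(r'(R), r(R)/R, …, r(R)/R)` minus `(κ(n−1)/n) λⁿ ln λ`, the integral being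
defined as the difference of the lower integrals of the positive and negative parts). -/
def IHatE (n : ℕ) (κ lam : ℝ) (h : ℝ → ℝ) (r r' : ℝ → ℝ) : EReal :=
  (((∫⁻ R in Set.Ioc (0:ℝ) 1,
      ENNReal.ofReal (R ^ (n - 1) * PhiHat n κ h (r' R) (r R / R))) : ℝ≥0∞) : EReal)
  - (((∫⁻ R in Set.Ioc (0:ℝ) 1,
      ENNReal.ofReal (-(R ^ (n - 1) * PhiHat n κ h (r' R) (r R / R)))) : ℝ≥0∞) : EReal)
  - ((κ * ((n : ℝ) - 1) / n * lam ^ n * Real.log lam : ℝ) : EReal)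

/-
Put `δ = r' (r / R) ^ (n - 1)`. Then `y = r ^ n` has derivative `n R ^ (n - 1) δ`, so `r` is
recovered from `δ` and the boundary value `λ`, and `r` is admissible exactly when `δ > 0` almost
everywhere and `r 0 ^ n = λ ^ n - n ∫ R ^ (n - 1) δ dR` is nonnegative: a convex set of densities.
In these variables `R ^ (n - 1) Φ̂` is the sum of the null Lagrangian
`d/dR (κ (n - 1) / n ² · y log y)` and of `R ^ (n - 1)` times a nonnegative convex function of
`(y, δ)`, itself composed of a multiple of the perspective `δ ^ n / y ^ (n - 1)` of `x ↦ x ^ n`, the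
term `h δ`, and a linear term with coefficient proportional to `-log R ≥ 0`. The boundary value of
the null Lagrangian at `R = 1` is the term subtracted in `Î`, so only a continuous function of
`r 0 ^ n` remains.

For the direct method, the strictly convex functional `∫ exp (-δ)` selects from the convex sublevel
sets of the energy a minimising sequence that converges almost everywhere. The superlinear growth of
`h` makes it uniformly integrable, so that `y` and `r 0 ^ n` pass to the limit; Fatou's lemma bounds
the energy of the limit, and the blow-up of `h` at `0` keeps the limit density positive.
-/

/-! ### Convergence almost everywhere of minimising sequences in convex sets of functions -/

lemma exists_seq_mem_midpoint_defect_le {V : Type*} [AddCommGroup V] [Module ℝ V]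
    {K : ℕ → Set V} (hanti : Antitone K) (hne : ∀ k, (K k).Nonempty)
    (hconv : ∀ k, Convex ℝ (K k)) {G : V → ℝ} {b B : ℝ} (hG : ∀ v ∈ K 0, G v ∈ Icc b B) :
    ∃ v : ℕ → V, (∀ k, v k ∈ K k) ∧ ∀ ε > 0, ∃ N, ∀ k ≥ N, ∀ l ≥ N,
      G (v k) + G (v l) - 2 * G (midpoint ℝ (v k) (v l)) ≤ ε := by
  have hbdd : ∀ k, BddBelow (G '' K k) := fun k =>
    ⟨b, forall_mem_image.2 fun v hv => (hG v (hanti (Nat.zero_le k) hv)).1⟩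
  have hmono : Monotone fun k => sInf (G '' K k) := fun k l hkl =>
    csInf_le_csInf (hbdd k) ((hne l).image G) (image_mono (hanti hkl))
  have hle : ∀ k, sInf (G '' K k) ≤ B := fun k =>
    (hne k).elim fun v hv => csInf_le_of_le (hbdd k) (mem_image_of_mem G hv)
      (hG v (hanti (Nat.zero_le k) hv)).2
  have hlim := tendsto_atTop_ciSup hmono ⟨B, forall_mem_range.2 hle⟩
  set s := ⨆ k, sInf (G '' K k)
  have hles : ∀ k, sInf (G '' K k) ≤ s := le_ciSup ⟨B, forall_mem_range.2 hle⟩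
  have happrox : ∀ k : ℕ, ∃ v ∈ K k, G v < sInf (G '' K k) + 1 / (k + 1) := fun k => by
    obtain ⟨_, ⟨v, hv, rfl⟩, hlt⟩ := exists_lt_of_csInf_lt ((hne k).image G)
      (lt_add_of_pos_right (sInf (G '' K k)) (Nat.one_div_pos_of_nat (α := ℝ) (n := k)))
    exact ⟨v, hv, hlt⟩
  choose v hvK hv using happrox
  refine ⟨v, hvK, fun ε hε => ?_⟩
  obtain ⟨N, hNlim, hNdiv⟩ := ((hlim.eventually_const_lt (sub_lt_self s (by positivity :
    0 < ε / 4))).and (tendsto_one_div_add_atTop_nhds_zero_nat.eventually_lt_const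
      (by positivity : 0 < ε / 4))).exists
  have hupper : ∀ k ≥ N, G (v k) ≤ s + ε / 4 := fun k hk => by
    linarith [hv k, hles k, Nat.one_div_le_one_div (α := ℝ) hk]
  refine ⟨N, fun k hk l hl => ?_⟩
  have hmid : sInf (G '' K N) ≤ G (midpoint ℝ (v k) (v l)) := csInf_le (hbdd N)
    (mem_image_of_mem G ((hconv N).midpoint_mem (hanti hk (hvK k)) (hanti hl (hvK l))))
  linarith [hupper k hk, hupper l hl]

section AEConvergence

variable {α : Type*} [MeasurableSpace α] {ν : Measure α}

lemma exists_subseq_tendsto_ae_of_integral_sq_cauchy {u : ℕ → α → ℝ} (hu : ∀ k, MemLp (u k) 2 ν)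
    (hcauchy : ∀ ε > 0, ∃ N, ∀ k ≥ N, ∀ l ≥ N, ∫ x, (u k x - u l x) ^ 2 ∂ν ≤ ε) :
    ∃ φ : ℕ → ℕ, StrictMono φ ∧ ∃ U : α → ℝ, Measurable U ∧
      ∀ᵐ x ∂ν, Tendsto (fun k => u (φ k) x) atTop (nhds (U x)) := by
  have hdist : ∀ k l, dist ((hu k).toLp (u k)) ((hu l).toLp (u l)) ^ 2 =
      ∫ x, (u k x - u l x) ^ 2 ∂ν := fun k l => by
    rw [dist_eq_norm, ← MemLp.toLp_sub, ← real_inner_self_eq_norm_sq, L2.inner_def]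
    refine integral_congr_ae ?_
    filter_upwards [((hu k).sub (hu l)).coeFn_toLp] with x hx
    rw [hx, real_inner_self_eq_norm_sq, Real.norm_eq_abs, sq_abs, Pi.sub_apply]
  have hLp : CauchySeq fun k => (hu k).toLp (u k) := by
    refine Metric.cauchySeq_iff.2 fun ε hε => ?_
    obtain ⟨N, hN⟩ := hcauchy (ε ^ 2 / 2) (by positivity)
    refine ⟨N, fun k hk l hl => lt_of_pow_lt_pow_left₀ 2 hε.le ?_⟩
    rw [hdist]
    exact (hN k hk l hl).trans_lt (half_lt_self (by positivity))
  obtain ⟨U, hU⟩ := cauchySeq_tendsto_of_complete hLp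
  obtain ⟨φ, hφ, hae⟩ := (tendstoInMeasure_of_tendsto_Lp hU).exists_seq_tendsto_ae
  refine ⟨φ, hφ, U, (Lp.stronglyMeasurable U).measurable, ?_⟩
  filter_upwards [hae, ae_all_iff.2 fun k => (hu (φ k)).coeFn_toLp] with x hx hxk
  simpa only [hxk] using hx

lemma ae_liminf_lt_top {g : ℕ → α → ℝ≥0∞} {C : ℝ≥0∞} (hg : ∀ k, AEMeasurable (g k) ν)
    (hC : C ≠ ∞) (hgC : ∀ k, ∫⁻ x, g k x ∂ν ≤ C) :
    ∀ᵐ x ∂ν, liminf (fun k => g k x) atTop < ∞ := by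
  have hmeas : AEMeasurable (fun x => liminf (fun k => g k x) atTop) ν := by
    refine ⟨fun x => liminf (fun k => (hg k).mk _ x) atTop,
      Measurable.liminf fun k => (hg k).measurable_mk, ?_⟩
    filter_upwards [ae_all_iff.2 fun k => (hg k).ae_eq_mk] with x hx
    simp only [hx]
  refine ae_lt_top' hmeas (ne_top_of_le_ne_top hC ((lintegral_liminf_le' hg).trans ?_))
  exact liminf_le_of_frequently_le' (Frequently.of_forall hgC)

variable [IsFiniteMeasure ν]

lemma integrable_exp_neg {f : α → ℝ} (hf : AEMeasurable f ν) (hf0 : ∀ᵐ x ∂ν, 0 ≤ f x) :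
    Integrable (fun x => exp (-f x)) ν := by
  refine Integrable.of_bound hf.neg.exp.aestronglyMeasurable 1 ?_
  filter_upwards [hf0] with x hx
  rw [Real.norm_eq_abs, abs_exp]
  exact exp_le_one_iff.2 (neg_nonpos.2 hx)

lemma integral_exp_neg_mem_Icc {f : α → ℝ} (hf : AEMeasurable f ν) (hf0 : ∀ᵐ x ∂ν, 0 ≤ f x) :
    ∫ x, exp (-f x) ∂ν ∈ Icc 0 (ν.real univ) := by
  refine ⟨integral_nonneg fun x => (exp_pos _).le, ?_⟩
  calc ∫ x, exp (-f x) ∂ν ≤ ∫ _, (1 : ℝ) ∂ν := by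
        refine integral_mono_ae (integrable_exp_neg hf hf0) (integrable_const _) ?_
        filter_upwards [hf0] with x hx using exp_le_one_iff.2 (neg_nonpos.2 hx)
    _ = ν.real univ := by simp

lemma memLp_exp_neg_half {f : α → ℝ} (hf : AEMeasurable f ν) (hf0 : ∀ᵐ x ∂ν, 0 ≤ f x) :
    MemLp (fun x => exp (-f x / 2)) 2 ν := by
  refine MemLp.of_bound (hf.neg.div_const 2).exp.aestronglyMeasurable 1 ?_
  filter_upwards [hf0] with x hx
  rw [Real.norm_eq_abs, abs_exp]
  exact exp_le_one_iff.2 (by linarith)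

lemma integral_sq_exp_neg_half_sub {f g : α → ℝ} (hf : AEMeasurable f ν)
    (hf0 : ∀ᵐ x ∂ν, 0 ≤ f x) (hg : AEMeasurable g ν) (hg0 : ∀ᵐ x ∂ν, 0 ≤ g x) :
    ∫ x, (exp (-f x / 2) - exp (-g x / 2)) ^ 2 ∂ν =
      ∫ x, exp (-f x) ∂ν + ∫ x, exp (-g x) ∂ν - 2 * ∫ x, exp (-midpoint ℝ f g x) ∂ν := by
  have hmid : ∀ x, midpoint ℝ f g x = (f x + g x) / 2 := fun x => by
    rw [midpoint_eq_smul_add, Pi.smul_apply, Pi.add_apply, smul_eq_mul, invOf_eq_inv]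
    ring
  have hsq : ∀ x, (exp (-f x / 2) - exp (-g x / 2)) ^ 2 =
      exp (-f x) + exp (-g x) - 2 * exp (-midpoint ℝ f g x) := fun x => by
    rw [sub_sq, ← exp_nat_mul, ← exp_nat_mul, mul_assoc, ← exp_add, hmid]
    ring_nf
  have hint : Integrable (fun x => exp (-midpoint ℝ f g x)) ν := by
    simp only [hmid]
    refine integrable_exp_neg ((hf.add hg).div_const 2) ?_
    filter_upwards [hf0, hg0] with x hfx hgx using div_nonneg (add_nonneg hfx hgx) zero_le_two
  simp only [hsq]
  rw [integral_sub ((integrable_exp_neg hf hf0).fun_add (integrable_exp_neg hg hg0))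
    (hint.const_mul 2), integral_add (integrable_exp_neg hf hf0) (integrable_exp_neg hg hg0),
    integral_const_mul]

lemma tendsto_of_tendsto_exp_neg_half {a : ℕ → ℝ} {b : ℝ} (hb : b ≠ 0)
    (h : Tendsto (fun k => exp (-a k / 2)) atTop (nhds b)) :
    Tendsto a atTop (nhds (-2 * log b)) := by
  refine ((h.log hb).const_mul (-2)).congr fun k => ?_
  rw [log_exp]
  ring

lemma tendsto_atTop_of_tendsto_exp_neg_half {a : ℕ → ℝ}
    (h : Tendsto (fun k => exp (-a k / 2)) atTop (nhds 0)) : Tendsto a atTop atTop := by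
  refine ((tendsto_exp_comp_nhds_zero.1 h).const_mul_atBot_of_neg
    (by norm_num : (-2 : ℝ) < 0)).congr fun k => ?_
  ring

-- The strictly convex functional `f ↦ ∫ exp (-f)` selects an almost minimising member of each
-- `K k`; since `(e^{-a/2} - e^{-b/2})² = e^{-a} + e^{-b} - 2 e^{-(a+b)/2}`, the functions
-- `exp (-f / 2)` of these members form a Cauchy sequence in `L²`.
theorem exists_seq_mem_tendsto_ae_of_antitone_convex {K : ℕ → Set (α → ℝ)} (hanti : Antitone K)
    (hne : ∀ k, (K k).Nonempty) (hconv : ∀ k, Convex ℝ (K k))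
    (hmeas : ∀ f ∈ K 0, AEMeasurable f ν) (hnonneg : ∀ f ∈ K 0, ∀ᵐ x ∂ν, 0 ≤ f x)
    {C : ℝ≥0∞} (hC : C ≠ ∞) (hbound : ∀ f ∈ K 0, ∫⁻ x, ENNReal.ofReal (f x) ∂ν ≤ C) :
    ∃ f : ℕ → α → ℝ, (∀ k, f k ∈ K k) ∧ ∃ F : α → ℝ, Measurable F ∧
      ∀ᵐ x ∂ν, Tendsto (fun k => f k x) atTop (nhds (F x)) := by
  have hK0 : ∀ k, K k ⊆ K 0 := fun k => hanti (Nat.zero_le k)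
  obtain ⟨g, hgK, hg⟩ := exists_seq_mem_midpoint_defect_le hanti hne hconv
    fun f hf => integral_exp_neg_mem_Icc (hmeas f hf) (hnonneg f hf)
  have hm : ∀ k, AEMeasurable (g k) ν := fun k => hmeas _ (hK0 k (hgK k))
  have h0 : ∀ k, ∀ᵐ x ∂ν, 0 ≤ g k x := fun k => hnonneg _ (hK0 k (hgK k))
  obtain ⟨φ, hφ, U, hU, hlim⟩ := exists_subseq_tendsto_ae_of_integral_sq_cauchy
    (fun k => memLp_exp_neg_half (hm k) (h0 k)) fun ε hε => by
      simpa only [integral_sq_exp_neg_half_sub (hm _) (h0 _) (hm _) (h0 _)] using hg ε hε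
  have hliminf := ae_liminf_lt_top (fun k => (hm (φ k)).ennreal_ofReal) hC
    fun k => hbound _ (hK0 (φ k) (hgK (φ k)))
  refine ⟨fun k => g (φ k), fun k => hanti (hφ.id_le k) (hgK (φ k)), fun x => -2 * log (U x),
    hU.log.const_mul _, ?_⟩
  filter_upwards [hlim, hliminf] with x hx hxlt
  refine tendsto_of_tendsto_exp_neg_half (fun hUx => hxlt.ne ?_) hx
  rw [hUx] at hx
  exact (ENNReal.tendsto_ofReal_atTop.comp (tendsto_atTop_of_tendsto_exp_neg_half hx)).liminf_eq

end AEConvergence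

/-! ### Superlinear growth -/

/-- The growth conditions on the volumetric energy under which the direct method applies: it is
nonnegative on `(0, ∞)`, blows up at `0⁺` and is superlinear at `∞`. -/
structure VolumetricGrowth (h : ℝ → ℝ) : Prop where
  nonneg : ∀ d : ℝ, 0 < d → 0 ≤ h d
  lim_zero : Tendsto h (nhdsWithin 0 (Ioi 0)) atTop
  lim_growth : Tendsto (fun d => h d / d) atTop atTop

namespace VolumetricGrowth

variable {h : ℝ → ℝ}

lemma exists_le_mul_add (H : VolumetricGrowth h) {ε : ℝ} (hε : 0 < ε) :
    ∃ C, 0 ≤ C ∧ ∀ a, 0 < a → a ≤ ε * h a + C := by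
  obtain ⟨M, hM⟩ := eventually_atTop.1 (H.lim_growth.eventually_ge_atTop ε⁻¹)
  refine ⟨max M 0, le_max_right _ _, fun a ha => ?_⟩
  rcases le_total M a with hMa | haM
  · have hle : a ≤ ε * h a := by
      rw [← inv_mul_le_iff₀ hε]
      exact (le_div_iff₀ ha).1 (hM a hMa)
    linarith [le_max_right M 0]
  · linarith [le_max_left M 0, mul_nonneg hε.le (H.nonneg a ha)]

variable {α : Type*} [MeasurableSpace α] {ν : Measure α}

lemma exists_setLIntegral_le (H : VolumetricGrowth h) {ε : ℝ} (hε : 0 < ε) :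
    ∃ C : ℝ≥0, ∀ f : α → ℝ, (∀ᵐ x ∂ν, 0 < f x) → ∀ s : Set α,
      ∫⁻ x in s, ENNReal.ofReal (f x) ∂ν ≤
        ENNReal.ofReal ε * ∫⁻ x, ENNReal.ofReal (h (f x)) ∂ν + C * ν s := by
  obtain ⟨C, hC0, hC⟩ := H.exists_le_mul_add hε
  refine ⟨C.toNNReal, fun f hf s => ?_⟩
  calc ∫⁻ x in s, ENNReal.ofReal (f x) ∂ν
      ≤ ∫⁻ x in s, (ENNReal.ofReal ε * ENNReal.ofReal (h (f x)) + ENNReal.ofReal C) ∂ν := by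
        refine lintegral_mono_ae (ae_restrict_of_ae ?_)
        filter_upwards [hf] with x hx
        rw [← ENNReal.ofReal_mul hε.le,
          ← ENNReal.ofReal_add (mul_nonneg hε.le (H.nonneg _ hx)) hC0]
        exact ENNReal.ofReal_le_ofReal (hC _ hx)
    _ = ENNReal.ofReal ε * ∫⁻ x in s, ENNReal.ofReal (h (f x)) ∂ν + C.toNNReal * ν s := by
        rw [lintegral_add_right _ measurable_const,
          lintegral_const_mul' _ _ ENNReal.ofReal_ne_top, setLIntegral_const,
          ENNReal.ofNNReal_toNNReal]
    _ ≤ _ := by gcongr; exact Measure.restrict_le_self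

lemma unifIntegrable (H : VolumetricGrowth h) {ι : Type*} {f : ι → α → ℝ} {C : ℝ≥0∞}
    (hC : C ≠ ∞) (hpos : ∀ i, ∀ᵐ x ∂ν, 0 < f i x)
    (hbound : ∀ i, ∫⁻ x, ENNReal.ofReal (h (f i x)) ∂ν ≤ C) : UnifIntegrable f 1 ν := by
  intro ε hε
  obtain ⟨K, hK⟩ := H.exists_setLIntegral_le (ν := ν)
    (by positivity : 0 < ε / (2 * (C.toReal + 1)))
  refine ⟨ε / (2 * (K + 1)), by positivity, fun i s hs hνs => ?_⟩
  have henergy : ENNReal.ofReal (ε / (2 * (C.toReal + 1))) *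
      ∫⁻ x, ENNReal.ofReal (h (f i x)) ∂ν ≤ ENNReal.ofReal (ε / 2) := by
    refine (mul_le_mul_right (hbound i) _).trans ?_
    rw [← ENNReal.ofReal_toReal hC, ← ENNReal.ofReal_mul (by positivity),
      ENNReal.toReal_ofReal ENNReal.toReal_nonneg]
    refine ENNReal.ofReal_le_ofReal ?_
    rw [div_mul_eq_mul_div, div_le_div_iff₀ (by positivity) two_pos]
    nlinarith [ENNReal.toReal_nonneg (a := C)]
  have hmeasure : K * ν s ≤ ENNReal.ofReal (ε / 2) := by
    refine (mul_le_mul_right hνs _).trans ?_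
    rw [← ENNReal.ofReal_coe_nnreal, ← ENNReal.ofReal_mul K.coe_nonneg]
    refine ENNReal.ofReal_le_ofReal ?_
    rw [mul_div_assoc', div_le_div_iff₀ (by positivity) two_pos]
    nlinarith [K.coe_nonneg]
  calc eLpNorm (s.indicator (f i)) 1 ν = ∫⁻ x in s, ENNReal.ofReal (f i x) ∂ν := by
        rw [eLpNorm_indicator_eq_eLpNorm_restrict hs, eLpNorm_one_eq_lintegral_enorm]
        refine lintegral_congr_ae (ae_restrict_of_ae ?_)
        filter_upwards [hpos i] with x hx using Real.enorm_eq_ofReal hx.le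
    _ ≤ ENNReal.ofReal (ε / 2) + ENNReal.ofReal (ε / 2) :=
        (hK (f i) (hpos i) s).trans (add_le_add henergy hmeasure)
    _ = ENNReal.ofReal ε := by
        rw [← ENNReal.ofReal_add (by positivity) (by positivity), add_halves]

lemma uniformIntegrable (H : VolumetricGrowth h) [IsFiniteMeasure ν] {ι : Type*} {f : ι → α → ℝ}
    {C : ℝ≥0∞} (hC : C ≠ ∞) (hf : ∀ i, AEMeasurable (f i) ν) (hpos : ∀ i, ∀ᵐ x ∂ν, 0 < f i x)
    (hbound : ∀ i, ∫⁻ x, ENNReal.ofReal (h (f i x)) ∂ν ≤ C) : UniformIntegrable f 1 ν := by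
  obtain ⟨K, hK⟩ := H.exists_setLIntegral_le (ν := ν) one_pos
  refine ⟨fun i => (hf i).aestronglyMeasurable, H.unifIntegrable hC hpos hbound,
    (ENNReal.ofReal 1 * C + K * ν univ).toNNReal, fun i => ?_⟩
  rw [ENNReal.coe_toNNReal (by finiteness), eLpNorm_one_eq_lintegral_enorm]
  calc ∫⁻ x, ‖f i x‖ₑ ∂ν = ∫⁻ x in univ, ENNReal.ofReal (f i x) ∂ν := by
        rw [Measure.restrict_univ]
        refine lintegral_congr_ae ?_
        filter_upwards [hpos i] with x hx using Real.enorm_eq_ofReal hx.le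
    _ ≤ ENNReal.ofReal 1 * C + K * ν univ :=
        (hK (f i) (hpos i) univ).trans (by gcongr; exact hbound i)

lemma ae_pos_of_tendsto (H : VolumetricGrowth h) {f : ℕ → α → ℝ} {F : α → ℝ}
    (hpos : ∀ k, ∀ᵐ x ∂ν, 0 < f k x)
    (hliminf : ∀ᵐ x ∂ν, liminf (fun k => ENNReal.ofReal (h (f k x))) atTop < ∞)
    (hlim : ∀ᵐ x ∂ν, Tendsto (fun k => f k x) atTop (nhds (F x))) :
    ∀ᵐ x ∂ν, 0 < F x := by
  filter_upwards [ae_all_iff.2 hpos, hliminf, hlim] with x hx hxlt hxlim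
  refine (ge_of_tendsto' hxlim fun k => (hx k).le).lt_of_ne fun hF => hxlt.ne ?_
  have hzero : Tendsto (fun k => f k x) atTop (nhdsWithin 0 (Ioi 0)) :=
    tendsto_nhdsWithin_iff.2 ⟨hF ▸ hxlim, Eventually.of_forall hx⟩
  exact (ENNReal.tendsto_ofReal_atTop.comp (H.lim_zero.comp hzero)).liminf_eq

end VolumetricGrowth

/-! ### The direct method for energies depending on a density and its cumulative integral -/

lemma integral_pos_of_ae_pos {α : Type*} [MeasurableSpace α] {μ : Measure α} (hμ : μ ≠ 0)
    {f : α → ℝ} (hf : Integrable f μ) (hpos : ∀ᵐ x ∂μ, 0 < f x) : 0 < ∫ x, f x ∂μ := by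
  have hnonneg : 0 ≤ᵐ[μ] f := hpos.mono fun _ => le_of_lt
  refine (integral_nonneg_of_ae hnonneg).lt_of_ne' fun hzero => hμ ?_
  rw [← ae_eq_bot, ← eventually_false_iff_eq_bot]
  filter_upwards [hpos, (integral_eq_zero_iff_of_nonneg_ae hnonneg hf).1 hzero] with x hx hx0
  exact hx.ne' hx0

lemma ae_measure_Iic_ne_zero (ν : Measure ℝ) : ∀ᵐ R ∂ν, ν (Iic R) ≠ 0 := by
  simp only [ae_iff, not_not]
  refine measure_null_of_locally_null _ fun R (hR : ν (Iic R) = 0) => ?_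
  by_cases hmax : ∀ S, ν (Iic S) = 0 → S ≤ R
  · exact ⟨Iic R, mem_of_superset self_mem_nhdsWithin hmax, hR⟩
  · push Not at hmax
    obtain ⟨S, hS, hRS⟩ := hmax
    exact ⟨Iic S, mem_nhdsWithin_of_mem_nhds (Iic_mem_nhds hRS), hS⟩

/-- The initial value `L - a ∫ f dν` of the increasing function with final value `L` and
`ν`-density `a * f`. -/
def baseValue (ν : Measure ℝ) (a L : ℝ) (f : ℝ → ℝ) : ℝ :=
  L - a * ∫ t, f t ∂ν

/-- The increasing function with final value `L` and `ν`-density `a * f`. -/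
def cumulative (ν : Measure ℝ) (a L : ℝ) (f : ℝ → ℝ) (R : ℝ) : ℝ :=
  baseValue ν a L f + a * ∫ t in Iic R, f t ∂ν

/-- Positive integrable densities whose cumulative function has a nonnegative initial value. -/
structure AdmissibleDensity (ν : Measure ℝ) (a L : ℝ) (f : ℝ → ℝ) : Prop where
  integrable : Integrable f ν
  pos : ∀ᵐ R ∂ν, 0 < f R
  baseValue_nonneg : 0 ≤ baseValue ν a L f

/-- The structure conditions of Tonelli's existence theory for an integrand `W R (y, x)`, where
`y` is the cumulative value and `x` the density: joint convexity in the open quadrant and growth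
controlled from below by `h x`. Superposition measurability is required as such. -/
structure TonelliIntegrand (ν : Measure ℝ) (h : ℝ → ℝ) (W : ℝ → ℝ × ℝ → ℝ) : Prop where
  convexOn : ∀ᵐ R ∂ν, ConvexOn ℝ (Ioi 0 ×ˢ Ioi 0) (W R)
  le : ∀ᵐ R ∂ν, ∀ z ∈ Ioi (0 : ℝ) ×ˢ Ioi (0 : ℝ), h z.2 ≤ W R z
  aemeasurable_comp : ∀ {y x : ℝ → ℝ}, AEMeasurable y ν → AEMeasurable x ν →
    (∀ᵐ R ∂ν, 0 < y R) → (∀ᵐ R ∂ν, 0 < x R) → AEMeasurable (fun R => W R (y R, x R)) ν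

/-- The energy of a density, for the integrand `W R (y, x)` with `y` the cumulative value. -/
def densityEnergy (ν : Measure ℝ) (a L : ℝ) (W : ℝ → ℝ × ℝ → ℝ) (f : ℝ → ℝ) : ℝ≥0∞ :=
  ∫⁻ R, ENNReal.ofReal (W R (cumulative ν a L f R, f R)) ∂ν

lemma exists_forall_approx_of_isCompact {X M : Type*} [PseudoMetricSpace M] {S : Set X}
    (hS : S.Nonempty) {E : X → ℝ} (hE : ∀ x ∈ S, 0 ≤ E x) {K : Set M} (hK : IsCompact K)
    {b : X → M} (hb : MapsTo b S K) {φ : M → ℝ} (hφ : ContinuousOn φ K) :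
    ∃ c ∈ K, ∃ m, (∀ x ∈ S, m ≤ E x - φ (b x)) ∧
      ∀ ε > 0, ∃ x ∈ S, E x ≤ m + φ c + ε ∧ b x ∈ Metric.closedBall c ε := by
  obtain ⟨B, hB⟩ := hK.bddAbove_image hφ
  have hbdd : BddBelow ((fun x => E x - φ (b x)) '' S) :=
    ⟨-B, forall_mem_image.2 fun x hx => by
      linarith [hE x hx, hB (mem_image_of_mem φ (hb hx))]⟩
  obtain ⟨u, -, hu, huS⟩ := exists_seq_tendsto_sInf (hS.image _) hbdd
  choose x hxS hxu using huS
  obtain ⟨c, hc, ψ, hψ, hlim⟩ := hK.tendsto_subseq fun k => hb (hxS k)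
  have hφlim : Tendsto (fun k => φ (b (x (ψ k)))) atTop (nhds (φ c)) :=
    (hφ c hc).tendsto.comp (tendsto_nhdsWithin_iff.2
      ⟨hlim, Eventually.of_forall fun k => hb (hxS (ψ k))⟩)
  have hElim := (hu.comp hψ.tendsto_atTop).add hφlim
  refine ⟨c, hc, _, fun x hx => csInf_le hbdd (mem_image_of_mem _ hx), fun ε hε => ?_⟩
  obtain ⟨k, hkE, hkb⟩ := ((hElim.eventually_le_const (lt_add_of_pos_right _ hε)).and
    (hlim.eventually_mem (Metric.closedBall_mem_nhds c hε))).exists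
  refine ⟨x (ψ k), hxS _, ?_, hkb⟩
  simpa only [Function.comp_apply, ← hxu, sub_add_cancel] using hkE

section Density

variable {ν : Measure ℝ} {a L : ℝ} {h : ℝ → ℝ} {W : ℝ → ℝ × ℝ → ℝ} {f g : ℝ → ℝ}

lemma baseValue_combo (hf : Integrable f ν) (hg : Integrable g ν) {s t : ℝ} (hst : s + t = 1) :
    baseValue ν a L (s • f + t • g) = s • baseValue ν a L f + t • baseValue ν a L g := by
  have hsum : ∫ x, (s • f + t • g) x ∂ν = s * ∫ x, f x ∂ν + t * ∫ x, g x ∂ν := by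
    simp only [Pi.add_apply, Pi.smul_apply, smul_eq_mul]
    rw [integral_add (hf.const_mul s) (hg.const_mul t), integral_const_mul, integral_const_mul]
  simp only [baseValue, hsum, smul_eq_mul]
  linear_combination (-L) * hst

lemma cumulative_combo (hf : Integrable f ν) (hg : Integrable g ν) {s t : ℝ} (hst : s + t = 1)
    (R : ℝ) : cumulative ν a L (s • f + t • g) R =
      s • cumulative ν a L f R + t • cumulative ν a L g R := by
  have hsum : ∫ x in Iic R, (s • f + t • g) x ∂ν =
      s * ∫ x in Iic R, f x ∂ν + t * ∫ x in Iic R, g x ∂ν := by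
    simp only [Pi.add_apply, Pi.smul_apply, smul_eq_mul]
    rw [integral_add (hf.const_mul s).integrableOn (hg.const_mul t).integrableOn,
      integral_const_mul, integral_const_mul]
  simp only [cumulative, hsum, baseValue_combo hf hg hst, smul_eq_mul]
  ring

lemma baseValue_congr (h : f =ᵐ[ν] g) : baseValue ν a L f = baseValue ν a L g := by
  rw [baseValue, baseValue, integral_congr_ae h]

lemma densityEnergy_congr (h : f =ᵐ[ν] g) : densityEnergy ν a L W f = densityEnergy ν a L W g := by
  refine lintegral_congr_ae ?_
  filter_upwards [h] with R hR
  simp only [cumulative, baseValue_congr h, integral_congr_ae (ae_restrict_of_ae h), hR]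

namespace AdmissibleDensity

lemma ae_cumulative_pos (hf : AdmissibleDensity ν a L f) (ha : 0 < a) :
    ∀ᵐ R ∂ν, 0 < cumulative ν a L f R := by
  filter_upwards [ae_measure_Iic_ne_zero ν] with R hR
  exact add_pos_of_nonneg_of_pos hf.baseValue_nonneg (mul_pos ha (integral_pos_of_ae_pos
    (mt Measure.restrict_eq_zero.1 hR) hf.integrable.integrableOn (ae_restrict_of_ae hf.pos)))

lemma measurable_cumulative (hf : AdmissibleDensity ν a L f) (ha : 0 ≤ a) :
    Measurable (cumulative ν a L f) := by
  refine Monotone.measurable fun R S hRS => ?_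
  have hmono : ∫ t in Iic R, f t ∂ν ≤ ∫ t in Iic S, f t ∂ν :=
    setIntegral_mono_set hf.integrable.integrableOn
      (ae_restrict_of_ae (hf.pos.mono fun _ => le_of_lt)) (Iic_subset_Iic.2 hRS).eventuallyLE
  exact add_le_add_right (mul_le_mul_of_nonneg_left hmono ha) _

lemma lintegral_le (hf : AdmissibleDensity ν a L f) (ha : 0 < a) :
    ∫⁻ R, ENNReal.ofReal (f R) ∂ν ≤ ENNReal.ofReal (L / a) := by
  rw [← ofReal_integral_eq_lintegral_ofReal hf.integrable (hf.pos.mono fun _ => le_of_lt)]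
  refine ENNReal.ofReal_le_ofReal ((le_div_iff₀' ha).2 ?_)
  exact sub_nonneg.1 hf.baseValue_nonneg

lemma baseValue_mem_Icc (hf : AdmissibleDensity ν a L f) (ha : 0 ≤ a) :
    baseValue ν a L f ∈ Icc 0 L :=
  ⟨hf.baseValue_nonneg, sub_le_self _ (mul_nonneg ha
    (integral_nonneg_of_ae (hf.pos.mono fun _ => le_of_lt)))⟩

end AdmissibleDensity

lemma convex_setOf_admissibleDensity : Convex ℝ {f | AdmissibleDensity ν a L f} := by
  refine convex_iff_forall_pos.2 fun f hf g hg s t hs ht hst => ⟨?_, ?_, ?_⟩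
  · exact (hf.integrable.smul s).add (hg.integrable.smul t)
  · filter_upwards [hf.pos, hg.pos] with R hfR hgR
    exact add_pos (mul_pos hs hfR) (mul_pos ht hgR)
  · rw [baseValue_combo hf.integrable hg.integrable hst]
    exact add_nonneg (mul_nonneg hs.le hf.baseValue_nonneg) (mul_nonneg ht.le hg.baseValue_nonneg)

lemma AdmissibleDensity.aemeasurable_integrand (hf : AdmissibleDensity ν a L f) (ha : 0 < a)
    (hW : TonelliIntegrand ν h W) :
    AEMeasurable (fun R => W R (cumulative ν a L f R, f R)) ν :=
  hW.aemeasurable_comp (hf.measurable_cumulative ha.le).aemeasurable hf.integrable.aemeasurable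
    (hf.ae_cumulative_pos ha) hf.pos

lemma AdmissibleDensity.lintegral_le_densityEnergy (hf : AdmissibleDensity ν a L f) (ha : 0 < a)
    (hW : TonelliIntegrand ν h W) :
    ∫⁻ R, ENNReal.ofReal (h (f R)) ∂ν ≤ densityEnergy ν a L W f := by
  refine lintegral_mono_ae ?_
  filter_upwards [hf.ae_cumulative_pos ha, hf.pos, hW.le] with R hy hx hle
  exact ENNReal.ofReal_le_ofReal (hle (_, _) ⟨hy, hx⟩)

lemma densityEnergy_combo_le (hW : TonelliIntegrand ν h W) (ha : 0 < a)
    (hf : AdmissibleDensity ν a L f) (hg : AdmissibleDensity ν a L g) {s t : ℝ} (hs : 0 ≤ s)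
    (ht : 0 ≤ t) (hst : s + t = 1) :
    densityEnergy ν a L W (s • f + t • g) ≤
      ENNReal.ofReal s * densityEnergy ν a L W f + ENNReal.ofReal t * densityEnergy ν a L W g := by
  have hmf := (hf.aemeasurable_integrand ha hW).ennreal_ofReal
  have hmg := (hg.aemeasurable_integrand ha hW).ennreal_ofReal
  unfold densityEnergy
  rw [← lintegral_const_mul'' _ hmf, ← lintegral_const_mul'' _ hmg,
    ← lintegral_add_left' (hmf.const_mul _)]
  refine lintegral_mono_ae ?_
  filter_upwards [hf.ae_cumulative_pos ha, hf.pos, hg.ae_cumulative_pos ha, hg.pos, hW.convexOn]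
    with R hyf hxf hyg hxg hconv
  rw [cumulative_combo hf.integrable hg.integrable hst, ← ENNReal.ofReal_mul hs,
    ← ENNReal.ofReal_mul ht]
  exact (ENNReal.ofReal_le_ofReal (hconv.2 (x := (_, _)) ⟨hyf, hxf⟩ (y := (_, _)) ⟨hyg, hxg⟩
    hs ht hst)).trans ENNReal.ofReal_add_le

lemma convex_setOf_densityEnergy_le (hW : TonelliIntegrand ν h W) (ha : 0 < a) (T : ℝ≥0∞)
    (c ε : ℝ) : Convex ℝ {f | AdmissibleDensity ν a L f ∧ densityEnergy ν a L W f ≤ T ∧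
      baseValue ν a L f ∈ Metric.closedBall c ε} := by
  rintro f ⟨hf, hfT, hfc⟩ g ⟨hg, hgT, hgc⟩ s t hs ht hst
  refine ⟨convex_setOf_admissibleDensity hf hg hs ht hst, ?_, ?_⟩
  · calc densityEnergy ν a L W (s • f + t • g)
        ≤ ENNReal.ofReal s * T + ENNReal.ofReal t * T :=
          (densityEnergy_combo_le hW ha hf hg hs ht hst).trans (by gcongr)
      _ = T := by rw [← add_mul, ← ENNReal.ofReal_add hs ht, hst, ENNReal.ofReal_one, one_mul]
  · rw [baseValue_combo hf.integrable hg.integrable hst]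
    exact convex_closedBall c ε hfc hgc hs ht hst

lemma densityEnergy_le_liminf (hW : TonelliIntegrand ν h W) (ha : 0 < a) {f : ℕ → ℝ → ℝ}
    {F : ℝ → ℝ} (hf : ∀ k, AdmissibleDensity ν a L (f k)) (hF : AdmissibleDensity ν a L F)
    (hlim : ∀ᵐ R ∂ν, Tendsto (fun k => f k R) atTop (nhds (F R)))
    (hcum : ∀ R, Tendsto (fun k => cumulative ν a L (f k) R) atTop
      (nhds (cumulative ν a L F R))) :
    densityEnergy ν a L W F ≤ liminf (fun k => densityEnergy ν a L W (f k)) atTop := by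
  refine le_trans (lintegral_mono_ae ?_) (lintegral_liminf_le' fun k =>
    ((hf k).aemeasurable_integrand ha hW).ennreal_ofReal)
  filter_upwards [hlim, hF.ae_cumulative_pos ha, hF.pos, hW.convexOn] with R hR hy hx hconv
  have hopen : IsOpen (Ioi (0 : ℝ) ×ˢ Ioi (0 : ℝ)) := isOpen_Ioi.prod isOpen_Ioi
  have hcont : ContinuousAt (W R) (cumulative ν a L F R, F R) :=
    (hconv.continuousOn hopen).continuousAt (hopen.mem_nhds ⟨hy, hx⟩)
  exact (ENNReal.tendsto_ofReal
    (hcont.tendsto.comp ((hcum R).prodMk_nhds hR))).liminf_eq.ge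

lemma ae_pos_of_densityEnergy_le (H : VolumetricGrowth h) (hW : TonelliIntegrand ν h W)
    (ha : 0 < a) {f : ℕ → ℝ → ℝ} {F : ℝ → ℝ} {C : ℝ≥0∞} (hC : C ≠ ∞)
    (hf : ∀ k, AdmissibleDensity ν a L (f k)) (hfC : ∀ k, densityEnergy ν a L W (f k) ≤ C)
    (hlim : ∀ᵐ R ∂ν, Tendsto (fun k => f k R) atTop (nhds (F R))) : ∀ᵐ R ∂ν, 0 < F R := by
  refine H.ae_pos_of_tendsto (fun k => (hf k).pos) ?_ hlim
  filter_upwards [ae_liminf_lt_top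
    (fun k => ((hf k).aemeasurable_integrand ha hW).ennreal_ofReal) hC hfC,
    ae_all_iff.2 fun k => (hf k).ae_cumulative_pos ha, ae_all_iff.2 fun k => (hf k).pos, hW.le]
    with R hlt hy hx hle
  exact (liminf_le_liminf (Eventually.of_forall fun k =>
    ENNReal.ofReal_le_ofReal (hle (_, _) ⟨hy k, hx k⟩))).trans_lt hlt

lemma tendsto_baseValue {f : ℕ → ℝ → ℝ} {F : ℝ → ℝ} (hF : Integrable F ν)
    (hf : ∀ k, Integrable (f k) ν)
    (hlim : Tendsto (fun k => eLpNorm (f k - F) 1 ν) atTop (nhds 0)) :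
    Tendsto (fun k => baseValue ν a L (f k)) atTop (nhds (baseValue ν a L F)) :=
  ((tendsto_integral_of_L1' F hF.aestronglyMeasurable (Eventually.of_forall hf)
    hlim).const_mul a).const_sub L

lemma tendsto_cumulative {f : ℕ → ℝ → ℝ} {F : ℝ → ℝ} (hF : Integrable F ν)
    (hf : ∀ k, Integrable (f k) ν)
    (hlim : Tendsto (fun k => eLpNorm (f k - F) 1 ν) atTop (nhds 0)) (R : ℝ) :
    Tendsto (fun k => cumulative ν a L (f k) R) atTop (nhds (cumulative ν a L F R)) :=
  (tendsto_baseValue hF hf hlim).add ((tendsto_setIntegral_of_L1' F hF.aestronglyMeasurable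
    (Eventually.of_forall hf) hlim (Iic R)).const_mul a)

variable [IsFiniteMeasure ν]

lemma exists_seq_tendsto_ae_of_forall_approx (hW : TonelliIntegrand ν h W) (ha : 0 < a)
    {T c : ℝ} (happrox : ∀ ε > 0, ∃ f, AdmissibleDensity ν a L f ∧
      densityEnergy ν a L W f ≤ ENNReal.ofReal (T + ε) ∧
      baseValue ν a L f ∈ Metric.closedBall c ε) :
    ∃ f : ℕ → ℝ → ℝ, (∀ k, AdmissibleDensity ν a L (f k) ∧
      densityEnergy ν a L W (f k) ≤ ENNReal.ofReal (T + 1 / (k + 1)) ∧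
      baseValue ν a L (f k) ∈ Metric.closedBall c (1 / (k + 1))) ∧
      ∃ F : ℝ → ℝ, ∀ᵐ R ∂ν, Tendsto (fun k => f k R) atTop (nhds (F R)) := by
  obtain ⟨f, hf, F, -, hlim⟩ := exists_seq_mem_tendsto_ae_of_antitone_convex (ν := ν)
    (K := fun k : ℕ => {f | AdmissibleDensity ν a L f ∧
      densityEnergy ν a L W f ≤ ENNReal.ofReal (T + 1 / (k + 1)) ∧
      baseValue ν a L f ∈ Metric.closedBall c (1 / (k + 1))})
    (fun k l hkl f hf => ⟨hf.1,
      hf.2.1.trans (ENNReal.ofReal_le_ofReal (by linarith [Nat.one_div_le_one_div (α := ℝ) hkl])),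
      Metric.closedBall_subset_closedBall (Nat.one_div_le_one_div hkl) hf.2.2⟩)
    (fun k => happrox _ Nat.one_div_pos_of_nat)
    (fun k => convex_setOf_densityEnergy_le hW ha _ c _)
    (fun f hf => hf.1.integrable.aemeasurable) (fun f hf => hf.1.pos.mono fun _ => le_of_lt)
    ENNReal.ofReal_ne_top (fun f hf => hf.1.lintegral_le ha)
  exact ⟨f, hf, F, hlim⟩

lemma exists_densityEnergy_le_of_forall_approx (H : VolumetricGrowth h)
    (hW : TonelliIntegrand ν h W) (ha : 0 < a) {T c : ℝ}
    (happrox : ∀ ε > 0, ∃ f, AdmissibleDensity ν a L f ∧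
      densityEnergy ν a L W f ≤ ENNReal.ofReal (T + ε) ∧
      baseValue ν a L f ∈ Metric.closedBall c ε) :
    ∃ F, AdmissibleDensity ν a L F ∧ densityEnergy ν a L W F ≤ ENNReal.ofReal T ∧
      baseValue ν a L F = c := by
  obtain ⟨f, hf, F, hlim⟩ := exists_seq_tendsto_ae_of_forall_approx hW ha happrox
  choose hadm hfT hfc using hf
  have hdiv : Tendsto (fun k : ℕ => 1 / ((k : ℝ) + 1)) atTop (nhds 0) :=
    tendsto_one_div_add_atTop_nhds_zero_nat
  have hT1 : ∀ k, densityEnergy ν a L W (f k) ≤ ENNReal.ofReal (T + 1) := fun k =>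
    (hfT k).trans (ENNReal.ofReal_le_ofReal (by
      linarith [Nat.one_div_le_one_div (α := ℝ) (Nat.zero_le k)]))
  have hunif := H.uniformIntegrable ENNReal.ofReal_ne_top
    (fun k => (hadm k).integrable.aemeasurable) (fun k => (hadm k).pos)
    fun k => ((hadm k).lintegral_le_densityEnergy ha hW).trans (hT1 k)
  have hF : Integrable F ν := hunif.integrable_of_ae_tendsto hlim
  have hL1 : Tendsto (fun k => eLpNorm (f k - F) 1 ν) atTop (nhds 0) :=
    tendsto_Lp_finite_of_tendsto_ae le_rfl ENNReal.one_ne_top hunif.1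
      (memLp_one_iff_integrable.2 hF) hunif.2.1 hlim
  have hc : baseValue ν a L F = c := tendsto_nhds_unique
    (tendsto_baseValue hF (fun k => (hadm k).integrable) hL1)
    (tendsto_iff_dist_tendsto_zero.2 (squeeze_zero (fun _ => dist_nonneg) hfc hdiv))
  have hFadm : AdmissibleDensity ν a L F :=
    ⟨hF, ae_pos_of_densityEnergy_le H hW ha ENNReal.ofReal_ne_top hadm hT1 hlim,
      ge_of_tendsto' (tendsto_baseValue hF (fun k => (hadm k).integrable) hL1)
        fun k => (hadm k).baseValue_nonneg⟩
  refine ⟨F, hFadm, ?_, hc⟩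
  calc densityEnergy ν a L W F ≤ liminf (fun k => densityEnergy ν a L W (f k)) atTop :=
        densityEnergy_le_liminf hW ha hadm hFadm hlim
          (tendsto_cumulative hF (fun k => (hadm k).integrable) hL1)
    _ ≤ liminf (fun k : ℕ => ENNReal.ofReal (T + 1 / (k + 1))) atTop :=
        liminf_le_liminf (Eventually.of_forall hfT)
    _ = ENNReal.ofReal T := by
        simpa using (ENNReal.tendsto_ofReal (hdiv.const_add T)).liminf_eq

lemma exists_isMinOn_toReal_densityEnergy_sub (H : VolumetricGrowth h)
    (hW : TonelliIntegrand ν h W) (ha : 0 < a) {φ : ℝ → ℝ} (hφ : ContinuousOn φ (Icc 0 L))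
    (hfin : ∃ f, AdmissibleDensity ν a L f ∧ densityEnergy ν a L W f ≠ ∞) :
    ∃ F ∈ {f | AdmissibleDensity ν a L f ∧ densityEnergy ν a L W f ≠ ∞},
      IsMinOn (fun f => (densityEnergy ν a L W f).toReal - φ (baseValue ν a L f))
        {f | AdmissibleDensity ν a L f ∧ densityEnergy ν a L W f ≠ ∞} F := by
  obtain ⟨c, -, m, hm, happrox⟩ := exists_forall_approx_of_isCompact hfin
    (fun _ _ => ENNReal.toReal_nonneg (a := densityEnergy ν a L W _)) isCompact_Icc
    (fun f hf => hf.1.baseValue_mem_Icc ha.le) hφ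
  obtain ⟨F, hF, hFT, hFc⟩ := exists_densityEnergy_le_of_forall_approx H hW ha
    (T := m + φ c) (c := c) fun ε hε => by
      obtain ⟨f, ⟨hf, hffin⟩, hfT, hfc⟩ := happrox ε hε
      exact ⟨f, hf, (ENNReal.le_ofReal_iff_toReal_le hffin
        (ENNReal.toReal_nonneg.trans hfT)).2 hfT, hfc⟩
  have hT : 0 ≤ m + φ c := le_of_forall_pos_le_add fun ε hε => by
    obtain ⟨f, -, hfT, -⟩ := happrox ε hε
    exact ENNReal.toReal_nonneg.trans hfT
  refine ⟨F, ⟨hF, ne_top_of_le_ne_top ENNReal.ofReal_ne_top hFT⟩, fun f hf => ?_⟩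
  have hle : (densityEnergy ν a L W F).toReal ≤ m + φ c := ENNReal.toReal_le_of_le_ofReal hT hFT
  simp only [mem_ofPred_eq, hFc]
  linarith [hm f hf]

theorem exists_isMinOn_densityEnergy_sub (H : VolumetricGrowth h) (hW : TonelliIntegrand ν h W)
    (ha : 0 < a) {φ : ℝ → ℝ} (hφ : ContinuousOn φ (Icc 0 L))
    (hfin : ∃ f, AdmissibleDensity ν a L f ∧ densityEnergy ν a L W f ≠ ∞) :
    ∃ F, AdmissibleDensity ν a L F ∧ densityEnergy ν a L W F ≠ ∞ ∧
      IsMinOn (fun f => (densityEnergy ν a L W f : EReal) - (φ (baseValue ν a L f) : EReal))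
        {f | AdmissibleDensity ν a L f} F := by
  let J : (ℝ → ℝ) → ℝ := fun f => (densityEnergy ν a L W f).toReal - φ (baseValue ν a L f)
  have hJ : ∀ f, densityEnergy ν a L W f ≠ ∞ →
      (densityEnergy ν a L W f : EReal) - (φ (baseValue ν a L f) : EReal) = (J f : EReal) :=
    fun f hf => by rw [EReal.coe_sub, EReal.coe_ennreal_toReal hf]
  obtain ⟨F, ⟨hF, hFfin⟩, hmin⟩ := exists_isMinOn_toReal_densityEnergy_sub H hW ha hφ hfin
  refine ⟨F, hF, hFfin, fun f hf => ?_⟩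
  simp only [mem_ofPred_eq]
  by_cases hfin : densityEnergy ν a L W f = ∞
  · rw [hfin, EReal.coe_ennreal_top, EReal.top_sub_coe]
    exact le_top
  · rw [hJ F hFfin, hJ f hfin, EReal.coe_le_coe_iff]
    exact hmin ⟨hf, hfin⟩

end Density

/-! ### The chain rule for primitives of integrable functions -/

/-- `f` is a primitive on `[a, b]` of the integrable function `g`; equivalently `f` is absolutely
continuous there with derivative `g` almost everywhere. -/
structure IsPrimitiveOn (f g : ℝ → ℝ) (a b : ℝ) : Prop where
  integrableOn : IntegrableOn g (Ioc a b)
  eq_add_integral : ∀ x ∈ Icc a b, f x = f a + ∫ t in Ioc a x, g t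

section AbsolutelyContinuous

variable {X Y : Type*} [PseudoMetricSpace X] [PseudoMetricSpace Y] {a b : ℝ}

lemma absolutelyContinuousOnInterval_congr {f g : ℝ → X}
    (hf : AbsolutelyContinuousOnInterval f a b) (h : EqOn f g (uIcc a b)) :
    AbsolutelyContinuousOnInterval g a b := by
  rw [absolutelyContinuousOnInterval_iff] at hf ⊢
  intro ε hε
  obtain ⟨δ, hδ, hf⟩ := hf ε hε
  refine ⟨δ, hδ, fun E hE hEδ => lt_of_eq_of_lt ?_ (hf E hE hEδ)⟩
  exact Finset.sum_congr rfl fun i hi => by rw [h (hE.1 i hi).1, h (hE.1 i hi).2]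

lemma absolutelyContinuousOnInterval_lipschitzOnWith_comp {f : ℝ → X} {φ : X → Y} {K : ℝ≥0}
    (hφ : LipschitzOnWith K φ (f '' uIcc a b)) (hf : AbsolutelyContinuousOnInterval f a b) :
    AbsolutelyContinuousOnInterval (fun x => φ (f x)) a b := by
  rw [absolutelyContinuousOnInterval_iff] at hf ⊢
  intro ε hε
  obtain ⟨δ, hδ, hf⟩ := hf (ε / (K + 1)) (by positivity)
  refine ⟨δ, hδ, fun E hE hEδ => ?_⟩
  have hsum := hf E hE hEδ
  rw [lt_div_iff₀ (by positivity), Finset.sum_mul] at hsum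
  refine (Finset.sum_le_sum fun i hi => ?_).trans_lt hsum
  refine (hφ.dist_le_mul _ (mem_image_of_mem f (hE.1 i hi).1) _
    (mem_image_of_mem f (hE.1 i hi).2)).trans ?_
  nlinarith [dist_nonneg (x := f (E.2 i).1) (y := f (E.2 i).2)]

end AbsolutelyContinuous

namespace IsPrimitiveOn

variable {f g φ φ' : ℝ → ℝ} {a b : ℝ}

lemma mono_right (hf : IsPrimitiveOn f g a b) {x : ℝ} (hx : x ≤ b) : IsPrimitiveOn f g a x :=
  ⟨hf.integrableOn.mono_set (Ioc_subset_Ioc_right hx),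
    fun y hy => hf.eq_add_integral y ⟨hy.1, hy.2.trans hx⟩⟩

lemma congr (hf : IsPrimitiveOn f g a b) {g₁ : ℝ → ℝ} (h : EqOn g g₁ (Ioc a b)) :
    IsPrimitiveOn f g₁ a b :=
  ⟨hf.integrableOn.congr_fun h measurableSet_Ioc, fun x hx => by
    rw [hf.eq_add_integral x hx, setIntegral_congr_fun measurableSet_Ioc
      (h.mono (Ioc_subset_Ioc_right hx.2))]⟩

lemma setIntegral_eq_sub (hf : IsPrimitiveOn f g a b) {x y : ℝ} (hx : x ∈ Icc a b) (hxy : x ≤ y)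
    (hy : y ≤ b) : ∫ t in Ioc x y, g t = f y - f x := by
  have hunion := setIntegral_union (Ioc_disjoint_Ioc_of_le (a := a) le_rfl) measurableSet_Ioc
    (hf.integrableOn.mono_set (Ioc_subset_Ioc_right hx.2))
    (hf.integrableOn.mono_set (Ioc_subset_Ioc hx.1 hy))
  rw [Ioc_union_Ioc_eq_Ioc hx.1 hxy] at hunion
  linarith [hf.eq_add_integral x hx, hf.eq_add_integral y ⟨hx.1.trans hxy, hy⟩]

lemma mono_left (hf : IsPrimitiveOn f g a b) {x : ℝ} (hx : a ≤ x) : IsPrimitiveOn f g x b :=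
  ⟨hf.integrableOn.mono_set (Ioc_subset_Ioc_left hx), fun y hy => by
    rw [hf.setIntegral_eq_sub ⟨hx, hy.1.trans hy.2⟩ hy.1 hy.2, add_sub_cancel]⟩

lemma continuousOn (hf : IsPrimitiveOn f g a b) : ContinuousOn f (Icc a b) :=
  (continuousOn_const.add (intervalIntegral.continuousOn_primitive
    ((integrableOn_Icc_iff_integrableOn_Ioc enorm_ne_top).2 hf.integrableOn))).congr
    hf.eq_add_integral

lemma eqOn_intervalIntegral (hf : IsPrimitiveOn f g a b) :
    EqOn (fun x => f a + ∫ t in a..x, g t) f (Icc a b) := fun x hx => by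
  rw [hf.eq_add_integral x hx]
  simp only [intervalIntegral.integral_of_le hx.1]

lemma absolutelyContinuousOnInterval (hf : IsPrimitiveOn f g a b) (hab : a ≤ b) :
    AbsolutelyContinuousOnInterval f a b := by
  have hconst : AbsolutelyContinuousOnInterval (fun _ : ℝ => f a) a b :=
    (LipschitzWith.const (f a)).lipschitzOnWith.absolutelyContinuousOnInterval
  have hg := (intervalIntegrable_iff_integrableOn_Ioc_of_le hab).2 hf.integrableOn
  exact absolutelyContinuousOnInterval_congr
    (hconst.add (hg.absolutelyContinuousOnInterval_intervalIntegral left_mem_uIcc))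
    (uIcc_of_le hab ▸ hf.eqOn_intervalIntegral)

lemma ae_hasDerivAt (hf : IsPrimitiveOn f g a b) :
    ∀ᵐ x ∂volume.restrict (Ioc a b), HasDerivAt f (g x) x := by
  rw [← restrict_Ioo_eq_restrict_Ioc, ae_restrict_iff' measurableSet_Ioo]
  rcases lt_or_ge b a with hba | hab
  · exact Eventually.of_forall fun x hx => absurd (hx.1.trans hx.2) hba.not_gt
  have hg := (intervalIntegrable_iff_integrableOn_Ioc_of_le hab).2 hf.integrableOn
  filter_upwards [hg.ae_hasDerivAt_integral] with x hx hxab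
  have hderiv := (hx (uIcc_of_le hab ▸ Ioo_subset_Icc_self hxab) a left_mem_uIcc).const_add (f a)
  exact hderiv.congr_of_eventuallyEq
    (hf.eqOn_intervalIntegral.symm.eventuallyEq_of_mem (Icc_mem_nhds hxab.1 hxab.2))

lemma ae_eq (hf : IsPrimitiveOn f g a b) {f₁ g₁ : ℝ → ℝ} (hf₁ : IsPrimitiveOn f₁ g₁ a b)
    (h : EqOn f f₁ (Icc a b)) : g =ᵐ[volume.restrict (Ioc a b)] g₁ := by
  have hmem : ∀ᵐ x ∂volume.restrict (Ioc a b), x ∈ Ioo a b := by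
    rw [← restrict_Ioo_eq_restrict_Ioc]
    exact ae_restrict_mem measurableSet_Ioo
  filter_upwards [hf.ae_hasDerivAt, hf₁.ae_hasDerivAt, hmem] with x hx hx₁ hxab
  exact hx.unique (hx₁.congr_of_eventuallyEq
    (h.eventuallyEq_of_mem (Icc_mem_nhds hxab.1 hxab.2)))

lemma pos (hf : IsPrimitiveOn f g a b) (hg : ∀ᵐ x ∂volume.restrict (Ioc a b), 0 < g x)
    (ha : 0 ≤ f a) {x : ℝ} (hx : x ∈ Ioc a b) : 0 < f x := by
  rw [hf.eq_add_integral x ⟨hx.1.le, hx.2⟩]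
  refine add_pos_of_nonneg_of_pos ha (integral_pos_of_ae_pos ?_ (hf.mono_right hx.2).integrableOn
    (ae_restrict_of_ae_restrict_of_subset (Ioc_subset_Ioc_right hx.2) hg))
  simpa [Measure.restrict_eq_zero] using hx.1

lemma integral_comp_mul (hf : IsPrimitiveOn f g a b) (hab : a ≤ b)
    (hφ : ∀ s ∈ f '' Icc a b, HasDerivAt φ (φ' s) s) (hφ' : ContinuousOn φ' (f '' Icc a b)) :
    ∫ t in Ioc a b, φ' (f t) * g t = φ (f b) - φ (f a) := by
  obtain ⟨K, hK⟩ :=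
    (isCompact_Icc.image_of_continuousOn hf.continuousOn).exists_bound_of_continuousOn hφ'
  have hlip : LipschitzOnWith K.toNNReal φ (f '' Icc a b) :=
    (isPreconnected_Icc.image f hf.continuousOn).ordConnected.convex
      |>.lipschitzOnWith_of_nnnorm_hasDerivWithin_le (fun s hs => (hφ s hs).hasDerivWithinAt)
        fun s hs => by
          rw [← norm_toNNReal]
          exact Real.toNNReal_le_toNNReal (hK s hs)
  rw [← uIcc_of_le hab] at hlip
  rw [← (absolutelyContinuousOnInterval_lipschitzOnWith_comp hlip
    (hf.absolutelyContinuousOnInterval hab)).integral_deriv_eq_sub,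
    intervalIntegral.integral_of_le hab]
  refine integral_congr_ae ?_
  filter_upwards [hf.ae_hasDerivAt, ae_restrict_mem measurableSet_Ioc] with t ht htab
  exact ((hφ _ (mem_image_of_mem f (Ioc_subset_Icc_self htab))).comp t ht).deriv.symm

lemma comp (hf : IsPrimitiveOn f g a b) (hφ : ∀ s ∈ f '' Icc a b, HasDerivAt φ (φ' s) s)
    (hφ' : ContinuousOn φ' (f '' Icc a b)) :
    IsPrimitiveOn (fun x => φ (f x)) (fun x => φ' (f x) * g x) a b where
  integrableOn := (((integrableOn_Icc_iff_integrableOn_Ioc enorm_ne_top).2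
    hf.integrableOn).continuousOn_mul (hφ'.comp hf.continuousOn (mapsTo_image f _))
    isCompact_Icc).mono_set Ioc_subset_Icc_self
  eq_add_integral x hx := by
    have hsub : f '' Icc a x ⊆ f '' Icc a b := image_mono (Icc_subset_Icc_right hx.2)
    rw [(hf.mono_right hx.2).integral_comp_mul hx.1 (fun s hs => hφ s (hsub hs)) (hφ'.mono hsub),
      add_sub_cancel]

lemma integrableOn_of_forall_Ioc (hf : ∀ x ∈ Ioc a b, IsPrimitiveOn f g x b)
    (hfc : ContinuousOn f (Icc a b)) (hg : ∀ᵐ x ∂volume.restrict (Ioc a b), 0 ≤ g x) :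
    IntegrableOn g (Ioc a b) := by
  rcases le_or_gt b a with hba | hab
  · simp [Ioc_eq_empty hba.not_gt]
  obtain ⟨M, hM⟩ := isCompact_Icc.exists_bound_of_continuousOn hfc
  obtain ⟨u, -, hu, hlim⟩ := exists_seq_strictAnti_tendsto' hab
  refine integrableOn_Ioc_of_intervalIntegral_norm_bounded_left (I := 2 * M) (a := u) (l := atTop)
    (fun i => (hf _ (Ioo_subset_Ioc_self (hu i))).integrableOn) hlim
    (Eventually.of_forall fun i => ?_)
  have hnorm : ∫ t in Ioc (u i) b, ‖g t‖ = ∫ t in Ioc (u i) b, g t := by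
    refine integral_congr_ae ?_
    filter_upwards [ae_restrict_of_ae_restrict_of_subset (Ioc_subset_Ioc_left (hu i).1.le) hg]
      with t ht using Real.norm_of_nonneg ht
  rw [hnorm, (hf _ (Ioo_subset_Ioc_self (hu i))).setIntegral_eq_sub
    (left_mem_Icc.2 (hu i).2.le) (hu i).2.le le_rfl]
  linarith [(abs_le.1 (hM b (right_mem_Icc.2 hab.le))).2,
    (abs_le.1 (hM (u i) (Ioo_subset_Icc_self (hu i)))).1]

lemma of_forall_Ioc (hf : ∀ x ∈ Ioc a b, IsPrimitiveOn f g x b)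
    (hfc : ContinuousOn f (Icc a b)) (hg : ∀ᵐ x ∂volume.restrict (Ioc a b), 0 ≤ g x) :
    IsPrimitiveOn f g a b := by
  have hint := integrableOn_of_forall_Ioc hf hfc hg
  refine ⟨hint, fun x hx => ?_⟩
  rcases hx.1.eq_or_lt with rfl | hax
  · simp
  let P : ℝ → ℝ := fun y => ∫ t in Ioc a y, g t
  have hP : IsPrimitiveOn P g a b := ⟨hint, fun y _ => by simp [P]⟩
  have hconst : EqOn (fun y => f y - P y) (fun _ => f x - P x) (Ioc a x) := fun y hy => by
    have hfy := (hf y ⟨hy.1, hy.2.trans hx.2⟩).setIntegral_eq_sub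
      (left_mem_Icc.2 (hy.2.trans hx.2)) hy.2 hx.2
    have hPy := hP.setIntegral_eq_sub ⟨hy.1.le, hy.2.trans hx.2⟩ hy.2 hx.2
    simp only
    linarith
  have ha : f a - P a = f x - P x := by
    have hclosure := hconst.of_subset_closure (t := Icc a x)
      ((hfc.sub hP.continuousOn).mono (Icc_subset_Icc_right hx.2)) continuousOn_const
      Ioc_subset_Icc_self (closure_Ioc hax.ne).ge
    exact hclosure (left_mem_Icc.2 hax.le)
  simp only [P, Ioc_self, Measure.restrict_empty, integral_zero_measure] at ha
  linarith

lemma comp_of_deriv_nonneg (hf : IsPrimitiveOn f g a b)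
    (hg : ∀ᵐ x ∂volume.restrict (Ioc a b), 0 < g x) (ha : 0 ≤ f a) (hφc : ContinuousOn φ (Ici 0))
    (hφ : ∀ s, 0 < s → HasDerivAt φ (φ' s) s) (hφ' : ContinuousOn φ' (Ioi 0))
    (hφ0 : ∀ s, 0 < s → 0 ≤ φ' s) :
    IsPrimitiveOn (fun x => φ (f x)) (fun x => φ' (f x) * g x) a b := by
  refine of_forall_Ioc (fun x hx => ?_) (hφc.comp hf.continuousOn fun x hx => ?_) ?_
  · have hsub : f '' Icc x b ⊆ Ioi 0 :=
      image_subset_iff.2 fun y hy => hf.pos hg ha ⟨hx.1.trans_le hy.1, hy.2⟩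
    exact (hf.mono_left hx.1.le).comp (fun s hs => hφ s (hsub hs)) (hφ'.mono hsub)
  · rcases hx.1.eq_or_lt with rfl | hax
    exacts [ha, (hf.pos hg ha ⟨hax, hx.2⟩).le]
  · filter_upwards [hg, ae_restrict_mem measurableSet_Ioc] with x hx hxab
    exact mul_nonneg (hφ0 _ (hf.pos hg ha hxab)) hx.le

lemma rpow_const (hf : IsPrimitiveOn f g a b)
    (hg : ∀ᵐ x ∂volume.restrict (Ioc a b), 0 < g x) (ha : 0 ≤ f a) {e : ℝ} (he : 0 ≤ e) :
    IsPrimitiveOn (fun x => f x ^ e) (fun x => e * f x ^ (e - 1) * g x) a b :=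
  hf.comp_of_deriv_nonneg (φ := (· ^ e)) (φ' := fun s => e * s ^ (e - 1)) hg ha
    (Real.continuous_rpow_const he).continuousOn
    (fun s hs => Real.hasDerivAt_rpow_const (Or.inl hs.ne'))
    (continuousOn_const.mul (continuousOn_id.rpow_const fun s hs => Or.inl (ne_of_gt hs)))
    (fun s hs => by positivity)

end IsPrimitiveOn

/-! ### The radial measure -/

/-- The measure `R ^ p dR` on `(0, 1]`: up to a constant, the radial part of Lebesgue measure on
the unit ball of dimension `p + 1`. -/
def radialMeasure (p : ℕ) : Measure ℝ :=
  (volume.restrict (Ioc (0 : ℝ) 1)).withDensity fun R => ENNReal.ofReal (R ^ p)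

section RadialMeasure

variable {p : ℕ} {a L : ℝ} {f y : ℝ → ℝ}

lemma measurable_ofReal_pow : Measurable fun R : ℝ => ENNReal.ofReal (R ^ p) := by fun_prop

instance : IsFiniteMeasure (radialMeasure p) :=
  isFiniteMeasure_withDensity_ofReal
    ((continuous_pow p).integrableOn_Ioc (a := (0 : ℝ)) (b := 1)).hasFiniteIntegral

lemma ae_radialMeasure_eq : ae (radialMeasure p) = ae (volume.restrict (Ioc (0 : ℝ) 1)) := by
  refine le_antisymm (withDensity_absolutelyContinuous _ _).ae_le
    (withDensity_absolutelyContinuous' measurable_ofReal_pow.aemeasurable ?_).ae_le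
  filter_upwards [ae_restrict_mem measurableSet_Ioc] with R hR
  exact (ENNReal.ofReal_pos.2 (pow_pos hR.1 p)).ne'

lemma ae_radialMeasure_mem_Ioc : ∀ᵐ R ∂radialMeasure p, R ∈ Ioc (0 : ℝ) 1 := by
  rw [ae_radialMeasure_eq]
  exact ae_restrict_mem measurableSet_Ioc

lemma lintegral_radialMeasure (F : ℝ → ℝ) :
    ∫⁻ R, ENNReal.ofReal (F R) ∂radialMeasure p =
      ∫⁻ R in Ioc (0 : ℝ) 1, ENNReal.ofReal (R ^ p * F R) := by
  rw [radialMeasure, lintegral_withDensity_eq_lintegral_mul_non_measurable _ measurable_ofReal_pow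
    (Eventually.of_forall fun _ => ENNReal.ofReal_lt_top)]
  refine setLIntegral_congr_fun measurableSet_Ioc fun R hR => ?_
  rw [Pi.mul_apply, ENNReal.ofReal_mul (pow_nonneg hR.1.le p)]

lemma integrable_radialMeasure_iff :
    Integrable f (radialMeasure p) ↔ IntegrableOn (fun R => R ^ p * f R) (Ioc (0 : ℝ) 1) := by
  rw [radialMeasure, integrable_withDensity_iff_integrable_smul' measurable_ofReal_pow
    (Eventually.of_forall fun _ => ENNReal.ofReal_lt_top)]
  refine integrableOn_congr_fun (fun R hR => ?_) measurableSet_Ioc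
  rw [ENNReal.toReal_ofReal (pow_nonneg hR.1.le p), smul_eq_mul]

lemma setIntegral_Iic_radialMeasure {R : ℝ} (hR : R ≤ 1) :
    ∫ t in Iic R, f t ∂radialMeasure p = ∫ t in Ioc 0 R, t ^ p * f t := by
  rw [radialMeasure, setIntegral_withDensity_eq_setIntegral_toReal_smul measurable_ofReal_pow
    (Eventually.of_forall fun _ => ENNReal.ofReal_lt_top) _ measurableSet_Iic,
    Measure.restrict_restrict measurableSet_Iic, inter_comm, Ioc_inter_Iic, min_eq_right hR]
  refine setIntegral_congr_fun measurableSet_Ioc fun t ht => ?_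
  rw [ENNReal.toReal_ofReal (pow_nonneg ht.1.le p), smul_eq_mul]

lemma cumulative_radialMeasure {R : ℝ} (hR : R ≤ 1) :
    cumulative (radialMeasure p) a L f R =
      baseValue (radialMeasure p) a L f + ∫ t in Ioc 0 R, a * (t ^ p * f t) := by
  rw [cumulative, setIntegral_Iic_radialMeasure hR, integral_const_mul]

lemma cumulative_radialMeasure_zero :
    cumulative (radialMeasure p) a L f 0 = baseValue (radialMeasure p) a L f := by
  simp [cumulative_radialMeasure zero_le_one]

lemma cumulative_radialMeasure_one : cumulative (radialMeasure p) a L f 1 = L := by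
  have huniv : (radialMeasure p).restrict (Iic 1) = radialMeasure p :=
    Measure.restrict_eq_self_of_ae_mem (ae_radialMeasure_mem_Ioc.mono fun _ hR => hR.2)
  rw [cumulative, huniv, baseValue, sub_add_cancel]

lemma isPrimitiveOn_cumulative (hf : Integrable f (radialMeasure p)) :
    IsPrimitiveOn (cumulative (radialMeasure p) a L f) (fun R => a * (R ^ p * f R)) 0 1 where
  integrableOn := (integrable_radialMeasure_iff.1 hf).const_mul a
  eq_add_integral R hR := by rw [cumulative_radialMeasure hR.2, cumulative_radialMeasure_zero]

namespace IsPrimitiveOn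

lemma integrable_radialMeasure (hy : IsPrimitiveOn y (fun R => a * (R ^ p * f R)) 0 1)
    (ha : a ≠ 0) : Integrable f (radialMeasure p) :=
  integrable_radialMeasure_iff.2 ((integrable_const_mul_iff ha.isUnit _).1 hy.integrableOn)

lemma baseValue_eq (hy : IsPrimitiveOn y (fun R => a * (R ^ p * f R)) 0 1) :
    baseValue (radialMeasure p) a (y 1) f = y 0 := by
  have hone := cumulative_radialMeasure (p := p) (a := a) (L := y 1) (f := f) le_rfl
  rw [cumulative_radialMeasure_one, hy.setIntegral_eq_sub (by simp) zero_le_one le_rfl] at hone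
  linarith

lemma cumulative_eq (hy : IsPrimitiveOn y (fun R => a * (R ^ p * f R)) 0 1) {R : ℝ}
    (hR : R ∈ Icc (0 : ℝ) 1) : cumulative (radialMeasure p) a (y 1) f R = y R := by
  rw [cumulative_radialMeasure hR.2, hy.baseValue_eq, hy.eq_add_integral R hR]

end IsPrimitiveOn

end RadialMeasure

/-! ### Reduction of the modified energy -/

lemma convexOn_perspective {E : Type*} [AddCommGroup E] [Module ℝ E] {D : Set E} {φ : E → ℝ}
    (hφ : ConvexOn ℝ D φ) :
    ConvexOn ℝ {z : ℝ × E | 0 < z.1 ∧ z.1⁻¹ • z.2 ∈ D} fun z => z.1 * φ (z.1⁻¹ • z.2) := by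
  suffices hcombo : ∀ ⦃z : ℝ × E⦄, 0 < z.1 ∧ z.1⁻¹ • z.2 ∈ D →
      ∀ ⦃w : ℝ × E⦄, 0 < w.1 ∧ w.1⁻¹ • w.2 ∈ D → ∀ ⦃s t : ℝ⦄, 0 < s → 0 < t →
      0 < (s • z + t • w).1 ∧ (s • z + t • w).1⁻¹ • (s • z + t • w).2 ∈ D ∧
      (s • z + t • w).1 * φ ((s • z + t • w).1⁻¹ • (s • z + t • w).2) ≤
        s * (z.1 * φ (z.1⁻¹ • z.2)) + t * (w.1 * φ (w.1⁻¹ • w.2)) from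
    convexOn_iff_forall_pos.2 ⟨convex_iff_forall_pos.2 fun z hz w hw s t hs ht _ =>
      ⟨(hcombo hz hw hs ht).1, (hcombo hz hw hs ht).2.1⟩,
      fun z hz w hw s t hs ht _ => (hcombo hz hw hs ht).2.2⟩
  rintro ⟨y₁, x₁⟩ ⟨hy₁, hx₁⟩ ⟨y₂, x₂⟩ ⟨hy₂, hx₂⟩ s t hs ht
  simp only [Prod.fst_add, Prod.smul_fst, Prod.snd_add, Prod.smul_snd, smul_eq_mul] at hx₁ hx₂ ⊢
  set y := s * y₁ + t * y₂ with hy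
  have hypos : 0 < y := by positivity
  have hweights : s * y₁ / y + t * y₂ / y = 1 := by rw [← add_div, ← hy, div_self hypos.ne']
  have hpoint : y⁻¹ • (s • x₁ + t • x₂) =
      (s * y₁ / y) • y₁⁻¹ • x₁ + (t * y₂ / y) • y₂⁻¹ • x₂ := by
    simp only [smul_add, smul_smul]
    congr 2 <;> field_simp
  rw [hpoint]
  refine ⟨hypos, hφ.1 hx₁ hx₂ (by positivity) (by positivity) hweights, ?_⟩
  calc y * φ ((s * y₁ / y) • y₁⁻¹ • x₁ + (t * y₂ / y) • y₂⁻¹ • x₂)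
      ≤ y * ((s * y₁ / y) * φ (y₁⁻¹ • x₁) + (t * y₂ / y) * φ (y₂⁻¹ • x₂)) :=
        mul_le_mul_of_nonneg_left
          (hφ.2 hx₁ hx₂ (by positivity) (by positivity) hweights) hypos.le
    _ = s * (y₁ * φ (y₁⁻¹ • x₁)) + t * (y₂ * φ (y₂⁻¹ • x₂)) := by field_simp

lemma convexOn_pow_succ_div_pow (p : ℕ) :
    ConvexOn ℝ (Ioi 0 ×ˢ Ioi 0) fun z : ℝ × ℝ => z.2 ^ (p + 1) / z.1 ^ p := by
  refine ((convexOn_perspective (convexOn_pow (p + 1))).subset (fun z hz => ⟨hz.1, ?_⟩)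
    ((convex_Ioi 0).prod (convex_Ioi 0))).congr fun z hz => ?_
  · exact mul_nonneg (inv_nonneg.2 (mem_Ioi.1 hz.1).le) (mem_Ioi.1 hz.2).le
  · have hz1 : z.1 ≠ 0 := ne_of_gt hz.1
    simp only [smul_eq_mul, mul_pow, inv_pow]
    field_simp
    ring

lemma aemeasurable_comp_of_continuousOn {α X Y : Type*} [MeasurableSpace α] {μ : Measure α}
    [TopologicalSpace X] [MeasurableSpace X] [OpensMeasurableSpace X] [TopologicalSpace Y]
    [MeasurableSpace Y] [BorelSpace Y] {s : Set X} {g : X → Y}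
    (hg : ContinuousOn g s) (hs : MeasurableSet s) {x : α → X} (hx : AEMeasurable x μ)
    (hxs : ∀ᵐ a ∂μ, x a ∈ s) : AEMeasurable (fun a => g (x a)) μ := by
  have hmap : (μ.map x).restrict s = μ.map x :=
    Measure.restrict_eq_self_of_ae_mem ((ae_map_iff hx hs).2 hxs)
  exact (hmap ▸ hg.aemeasurable hs : AEMeasurable g (μ.map x)).comp_aemeasurable hx

lemma coe_ennreal_sub_eq_add_coe_of_add_eq {A B q q' r : ℝ≥0∞} (hq : q ≠ ∞) (hq' : q' ≠ ∞)
    (hr : r ≠ ∞) (h : A + q' = B + q + r) :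
    (A : EReal) - (r : EReal) = (B : EReal) + ((q.toReal - q'.toReal : ℝ) : EReal) := by
  lift q to ℝ≥0 using hq
  lift q' to ℝ≥0 using hq'
  lift r to ℝ≥0 using hr
  by_cases hB : B = ∞
  · subst hB
    obtain rfl : A = ∞ := by simpa using h
    rw [EReal.coe_ennreal_top, EReal.top_add_coe, EReal.coe_nnreal_eq_coe_real,
      EReal.top_sub_coe]
  · have hA : A ≠ ∞ := fun hA => by simp [hA, hB, eq_comm] at h
    lift A to ℝ≥0 using hA
    lift B to ℝ≥0 using hB
    norm_cast at h
    have hsub : (A : ℝ) - r = B + (q - q') := by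
      linarith [(mod_cast h : (A : ℝ) + q' = B + q + r)]
    exact congrArg ((↑) : ℝ → EReal) hsub

lemma ereal_add_coe_sub_sub_coe (E : EReal) (x y : ℝ) :
    E + ((x - y : ℝ) : EReal) - (x : EReal) = E - (y : EReal) := by
  rw [sub_eq_add_neg, add_assoc, ← EReal.coe_neg, ← EReal.coe_add, sub_eq_add_neg E,
    ← EReal.coe_neg]
  congr 2
  ring

lemma lintegral_ofReal_sub_lintegral_ofReal_neg {α : Type*} [MeasurableSpace α] {μ : Measure α}
    {F P Q : α → ℝ} (hF : ∀ᵐ x ∂μ, F x = P x + Q x) (hP : AEMeasurable P μ)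
    (hP0 : ∀ᵐ x ∂μ, 0 ≤ P x) (hQ : Integrable Q μ) :
    ((∫⁻ x, ENNReal.ofReal (F x) ∂μ : ℝ≥0∞) : EReal) -
        ((∫⁻ x, ENNReal.ofReal (-F x) ∂μ : ℝ≥0∞) : EReal) =
      ((∫⁻ x, ENNReal.ofReal (P x) ∂μ : ℝ≥0∞) : EReal) + ((∫ x, Q x ∂μ : ℝ) : EReal) := by
  have hQpos := hQ.lintegral_lt_top.ne
  have hQneg : ∫⁻ x, ENNReal.ofReal (-Q x) ∂μ ≠ ∞ := hQ.neg.lintegral_lt_top.ne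
  have hFneg : ∫⁻ x, ENNReal.ofReal (-F x) ∂μ ≠ ∞ := by
    refine ne_top_of_le_ne_top hQneg (lintegral_mono_ae ?_)
    filter_upwards [hF, hP0] with x hx hx0 using ENNReal.ofReal_le_ofReal (by linarith)
  have hbalance : ∫⁻ x, ENNReal.ofReal (F x) ∂μ + ∫⁻ x, ENNReal.ofReal (-Q x) ∂μ =
      ∫⁻ x, ENNReal.ofReal (P x) ∂μ + ∫⁻ x, ENNReal.ofReal (Q x) ∂μ +
        ∫⁻ x, ENNReal.ofReal (-F x) ∂μ := by
    have hQm := hQ.aemeasurable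
    have hFm : AEMeasurable F μ := (hP.add hQm).congr (EventuallyEq.symm hF)
    rw [← lintegral_add_right' _ hQm.fun_neg.ennreal_ofReal,
      ← lintegral_add_right' _ hQm.ennreal_ofReal,
      ← lintegral_add_right' _ hFm.fun_neg.ennreal_ofReal]
    refine lintegral_congr_ae ?_
    filter_upwards [hF, hP0] with x hx hx0
    simp only [hx, ENNReal.ofReal, ← ENNReal.coe_add, ENNReal.coe_inj]
    refine NNReal.coe_injective ?_
    simp only [NNReal.coe_add, Real.coe_toNNReal']
    grind
  rw [integral_eq_lintegral_pos_part_sub_lintegral_neg_part hQ]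
  exact coe_ennreal_sub_eq_add_coe_of_add_eq hQpos hQneg hFneg hbalance

section Reduction

/-- The density, with respect to `R ^ p dR`, of the modified energy less the null Lagrangian
`cavityTermDeriv p κ (r R) * r' R`, as a function of `z = (r R ^ n, δ R)` where `n = p + 1`. -/
def radialIntegrand (p : ℕ) (κ : ℝ) (h : ℝ → ℝ) (R : ℝ) (z : ℝ × ℝ) : ℝ :=
  κ / (p + 1) * R ^ (p * (p + 1)) * (z.2 ^ (p + 1) / z.1 ^ p) + h z.2 +
    κ * p * (-Real.log R) * z.2

/-- The boundary term of the null Lagrangian, as a function of `c = ρ ^ n` where `n = p + 1`. -/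
def cavityTerm (p : ℕ) (κ c : ℝ) : ℝ :=
  κ * p / (p + 1) ^ 2 * (c * Real.log c)

/-- The derivative of `ρ ↦ cavityTerm p κ (ρ ^ (p + 1))`. -/
def cavityTermDeriv (p : ℕ) (κ ρ : ℝ) : ℝ :=
  κ * (p * (ρ ^ p * Real.log ρ)) + κ * p / (p + 1) * ρ ^ p

variable {p : ℕ} {κ lam : ℝ} {h r r' f : ℝ → ℝ}

lemma aemeasurable_radialIntegrand_comp {μ : Measure ℝ} (hh : ContinuousOn h (Ioi 0))
    {y x : ℝ → ℝ} (hy : AEMeasurable y μ) (hx : AEMeasurable x μ) (hxpos : ∀ᵐ R ∂μ, 0 < x R) :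
    AEMeasurable (fun R => radialIntegrand p κ h R (y R, x R)) μ := by
  have hhx : AEMeasurable (fun R => h (x R)) μ :=
    aemeasurable_comp_of_continuousOn hh measurableSet_Ioi hx hxpos
  refine (AEMeasurable.fun_add ?_ hhx).fun_add ?_ <;> fun_prop

lemma tonelliIntegrand_radialIntegrand (hκ : 0 ≤ κ) (hh : ConvexOn ℝ (Ioi 0) h) :
    TonelliIntegrand (radialMeasure p) h (radialIntegrand p κ h) where
  convexOn := by
    filter_upwards [ae_radialMeasure_mem_Ioc] with R hR
    have hquadrant : Convex ℝ (Ioi (0 : ℝ) ×ˢ Ioi (0 : ℝ)) := (convex_Ioi 0).prod (convex_Ioi 0)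
    have hstretch := (convexOn_pow_succ_div_pow p).smul
      (c := κ / (p + 1) * R ^ (p * (p + 1))) (by have := hR.1; positivity)
    have hvolume := (hh.comp_linearMap (LinearMap.snd ℝ ℝ ℝ)).subset
      (fun z (hz : z ∈ Ioi (0 : ℝ) ×ˢ Ioi (0 : ℝ)) => hz.2) hquadrant
    have hlinear : ConvexOn ℝ (Ioi (0 : ℝ) ×ˢ Ioi (0 : ℝ))
        ((κ * p * (-Real.log R)) • LinearMap.snd ℝ ℝ ℝ) := LinearMap.convexOn _ hquadrant
    exact (hstretch.add hvolume).add hlinear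
  le := by
    filter_upwards [ae_radialMeasure_mem_Ioc] with R hR z hz
    have hlog : 0 ≤ -Real.log R := neg_nonneg.2 (Real.log_nonpos hR.1.le hR.2)
    have hR0 := hR.1
    have hz1 := mem_Ioi.1 hz.1
    have hz2 := mem_Ioi.1 hz.2
    have hstretch : 0 ≤ κ / (p + 1) * R ^ (p * (p + 1)) * (z.2 ^ (p + 1) / z.1 ^ p) := by
      positivity
    have hlinear : 0 ≤ κ * p * (-Real.log R) * z.2 := by positivity
    unfold radialIntegrand
    linarith
  aemeasurable_comp hy hx _ hxpos :=
    aemeasurable_radialIntegrand_comp (hh.continuousOn isOpen_Ioi) hy hx hxpos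

lemma continuous_cavityTerm : Continuous (cavityTerm p κ) :=
  continuous_const.mul Real.continuous_mul_log

lemma continuous_cavityTermDeriv : Continuous (cavityTermDeriv p κ) := by
  have hlog : Continuous fun ρ : ℝ => (p : ℝ) * (ρ ^ p * Real.log ρ) := by
    cases p with
    | zero => simpa using continuous_const
    | succ m =>
      simp only [pow_succ, mul_assoc]
      exact continuous_const.mul ((continuous_pow m).mul Real.continuous_mul_log)
  unfold cavityTermDeriv
  fun_prop

lemma hasDerivAt_cavityTerm_pow (ρ : ℝ) :
    HasDerivAt (fun ρ => cavityTerm p κ (ρ ^ (p + 1))) (cavityTermDeriv p κ ρ) ρ := by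
  refine hasDerivAt_of_hasDerivAt_of_ne' (x := 0) (fun ρ hρ => ?_)
    (continuous_cavityTerm.comp (continuous_pow (p + 1))).continuousAt
    continuous_cavityTermDeriv.continuousAt ρ
  have hlog := (Real.hasDerivAt_mul_log (pow_ne_zero (p + 1) hρ)).comp (h := (· ^ (p + 1))) ρ
    (hasDerivAt_pow (p + 1) ρ)
  refine (hlog.const_mul (κ * p / (p + 1) ^ 2)).congr_deriv ?_
  rw [Real.log_pow, cavityTermDeriv]
  push_cast
  field_simp

lemma cavityTerm_pow (ρ : ℝ) :
    cavityTerm p κ (ρ ^ (p + 1)) =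
      κ * (((p + 1 : ℕ) : ℝ) - 1) / (p + 1 : ℕ) * ρ ^ (p + 1) * Real.log ρ := by
  rw [cavityTerm, Real.log_pow]
  push_cast
  field_simp
  ring

lemma pow_mul_PhiHat {q ρ R : ℝ} (hρ : 0 < ρ) (hR : 0 < R) :
    R ^ p * PhiHat (p + 1) κ h q (ρ / R) =
      R ^ p * radialIntegrand p κ h R (ρ ^ (p + 1), q * (ρ / R) ^ p) +
        cavityTermDeriv p κ ρ * q := by
  have hstretch : R ^ (p * (p + 1)) * ((q * (ρ / R) ^ p) ^ (p + 1) / (ρ ^ (p + 1)) ^ p) =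
      q ^ (p + 1) := by
    rw [mul_pow, ← pow_mul, div_pow, ← pow_mul, mul_comm (p + 1) p]
    field_simp
  unfold PhiHat radialIntegrand cavityTermDeriv
  rw [mul_assoc (κ / _), hstretch, Real.log_div hρ.ne' hR.ne', Nat.add_sub_cancel]
  push_cast
  simp only [div_pow]
  field_simp
  ring

lemma pow_mul_del {R : ℝ} (hR : 0 < R) : R ^ p * del (p + 1) r r' R = r R ^ p * r' R := by
  simp only [del, Nat.add_sub_cancel, div_pow]
  field_simp

namespace Adm

lemma isPrimitiveOn (hr : Adm lam r r') : IsPrimitiveOn r r' 0 1 :=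
  ⟨hr.intg, hr.ftc⟩

lemma pos (hr : Adm lam r r') {R : ℝ} (hR : R ∈ Ioc (0 : ℝ) 1) : 0 < r R :=
  hr.isPrimitiveOn.pos hr.derivPos hr.c0 hR

lemma isPrimitiveOn_pow (hr : Adm lam r r') :
    IsPrimitiveOn (fun R => r R ^ (p + 1)) (fun R => (p + 1) * (R ^ p * del (p + 1) r r' R))
      0 1 := by
  refine (hr.isPrimitiveOn.comp (φ := fun s => s ^ (p + 1)) (φ' := fun s => (p + 1) * s ^ p)
    (fun s _ => ?_) (by fun_prop)).congr fun R hR => ?_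
  · simpa using hasDerivAt_pow (p + 1) s
  · simp only [pow_mul_del hR.1, mul_assoc]

lemma isPrimitiveOn_cavityTerm (hr : Adm lam r r') :
    IsPrimitiveOn (fun R => cavityTerm p κ (r R ^ (p + 1)))
      (fun R => cavityTermDeriv p κ (r R) * r' R) 0 1 :=
  hr.isPrimitiveOn.comp (φ := fun ρ => cavityTerm p κ (ρ ^ (p + 1)))
    (fun ρ _ => hasDerivAt_cavityTerm_pow ρ) continuous_cavityTermDeriv.continuousOn

lemma baseValue_del (hr : Adm lam r r') :
    baseValue (radialMeasure p) (p + 1) (lam ^ (p + 1)) (del (p + 1) r r') = r 0 ^ (p + 1) := by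
  simpa only [hr.bc] using hr.isPrimitiveOn_pow.baseValue_eq

lemma cumulative_del (hr : Adm lam r r') {R : ℝ} (hR : R ∈ Icc (0 : ℝ) 1) :
    cumulative (radialMeasure p) (p + 1) (lam ^ (p + 1)) (del (p + 1) r r') R =
      r R ^ (p + 1) := by
  simpa only [hr.bc] using hr.isPrimitiveOn_pow.cumulative_eq hR

lemma admissibleDensity (hr : Adm lam r r') :
    AdmissibleDensity (radialMeasure p) (p + 1) (lam ^ (p + 1)) (del (p + 1) r r') where
  integrable := hr.isPrimitiveOn_pow.integrable_radialMeasure (by positivity)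
  pos := by
    rw [ae_radialMeasure_eq]
    filter_upwards [ae_restrict_mem measurableSet_Ioc, hr.derivPos] with R hR hR'
    exact mul_pos hR' (pow_pos (div_pos (hr.pos hR) hR.1) _)
  baseValue_nonneg := hr.baseValue_del ▸ pow_nonneg hr.c0 _

lemma pow_mul_PhiHat_eq (hr : Adm lam r r') {R : ℝ} (hR : R ∈ Ioc (0 : ℝ) 1) :
    R ^ p * PhiHat (p + 1) κ h (r' R) (r R / R) =
      R ^ p * radialIntegrand p κ h R
        (cumulative (radialMeasure p) (p + 1) (lam ^ (p + 1)) (del (p + 1) r r') R,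
          del (p + 1) r r' R) + cavityTermDeriv p κ (r R) * r' R := by
  rw [hr.cumulative_del (Ioc_subset_Icc_self hR)]
  exact pow_mul_PhiHat (hr.pos hR) hR.1

lemma IHatE_eq (hr : Adm lam r r') (hκ : 0 ≤ κ) (hh : ConvexOn ℝ (Ioi 0) h)
    (hh0 : ∀ d, 0 < d → 0 ≤ h d) :
    IHatE (p + 1) κ lam h r r' =
      (densityEnergy (radialMeasure p) (p + 1) (lam ^ (p + 1)) (radialIntegrand p κ h)
        (del (p + 1) r r') : EReal) -
      (cavityTerm p κ
        (baseValue (radialMeasure p) (p + 1) (lam ^ (p + 1)) (del (p + 1) r r')) : EReal) := by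
  have hW := tonelliIntegrand_radialIntegrand (p := p) hκ hh
  have hδ := hr.admissibleDensity (p := p)
  have hnull := hr.isPrimitiveOn_cavityTerm (p := p) (κ := κ)
  have ha : (0 : ℝ) < p + 1 := by positivity
  let w : ℝ → ℝ := fun R => radialIntegrand p κ h R
    (cumulative (radialMeasure p) (p + 1) (lam ^ (p + 1)) (del (p + 1) r r') R, del (p + 1) r r' R)
  have hwm : AEMeasurable (fun R => R ^ p * w R) (volume.restrict (Ioc (0 : ℝ) 1)) :=
    (continuous_pow p).aemeasurable.mul ((hδ.aemeasurable_integrand ha hW).mono_ac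
      (Measure.ae_le_iff_absolutelyContinuous.1 ae_radialMeasure_eq.ge))
  have hw0 : ∀ᵐ R ∂volume.restrict (Ioc (0 : ℝ) 1), 0 ≤ R ^ p * w R := by
    rw [← ae_radialMeasure_eq (p := p)]
    filter_upwards [hδ.pos, hδ.ae_cumulative_pos ha, hW.le, ae_radialMeasure_mem_Ioc]
      with R hx hy hle hR
    exact mul_nonneg (pow_nonneg hR.1.le p) ((hh0 _ hx).trans (hle (_, _) ⟨hy, hx⟩))
  have hsplit := lintegral_ofReal_sub_lintegral_ofReal_neg
    ((ae_restrict_mem measurableSet_Ioc).mono fun R hR => hr.pow_mul_PhiHat_eq hR)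
    hwm hw0 hnull.integrableOn
  rw [hnull.setIntegral_eq_sub (by simp) zero_le_one le_rfl, ← lintegral_radialMeasure w,
    hr.bc] at hsplit
  rw [IHatE, Nat.add_sub_cancel, hsplit, hr.baseValue_del, ← cavityTerm_pow]
  exact ereal_add_coe_sub_sub_coe _ _ _

end Adm

lemma AdmissibleDensity.exists_adm (hlam : 0 < lam)
    (hf : AdmissibleDensity (radialMeasure p) (p + 1) (lam ^ (p + 1)) f) :
    ∃ r r', Adm lam r r' ∧ del (p + 1) r r' =ᵐ[radialMeasure p] f := by
  let y := cumulative (radialMeasure p) (p + 1) (lam ^ (p + 1)) f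
  let e : ℝ := ((p + 1 : ℕ) : ℝ)⁻¹
  have he : 0 < e := by positivity
  have hy : IsPrimitiveOn y (fun R => (p + 1) * (R ^ p * f R)) 0 1 :=
    isPrimitiveOn_cumulative hf.integrable
  have hy0 : 0 ≤ y 0 := by
    simpa only [y, cumulative_radialMeasure_zero] using hf.baseValue_nonneg
  have hypos : ∀ᵐ R ∂volume.restrict (Ioc (0 : ℝ) 1), 0 < ((p : ℝ) + 1) * (R ^ p * f R) := by
    rw [← ae_radialMeasure_eq (p := p)]
    filter_upwards [hf.pos, ae_radialMeasure_mem_Ioc] with R hR hR01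
    have := hR01.1
    positivity
  have hr := hy.rpow_const hypos hy0 he.le
  have hadm : Adm lam (fun R => y R ^ e)
      (fun R => e * y R ^ (e - 1) * ((p + 1) * (R ^ p * f R))) :=
    { intg := hr.integrableOn
      ftc := hr.eq_add_integral
      derivPos := by
        filter_upwards [hypos, ae_restrict_mem measurableSet_Ioc] with R hR hR01
        have := hy.pos hypos hy0 hR01
        positivity
      bc := by
        simp only [y, cumulative_radialMeasure_one]
        exact Real.pow_rpow_inv_natCast hlam.le (Nat.succ_ne_zero p)
      c0 := Real.rpow_nonneg hy0 _ }
  refine ⟨_, _, hadm, ?_⟩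
  have hpow : EqOn (fun R => (y R ^ e) ^ (p + 1)) y (Icc 0 1) := fun R hR => by
    refine Real.rpow_inv_natCast_pow ?_ (Nat.succ_ne_zero p)
    rcases hR.1.eq_or_lt with rfl | hR0
    exacts [hy0, (hy.pos hypos hy0 ⟨hR0, hR.2⟩).le]
  rw [EventuallyEq, ae_radialMeasure_eq]
  filter_upwards [hadm.isPrimitiveOn_pow.ae_eq hy hpow, ae_restrict_mem measurableSet_Ioc]
    with R hR hR01
  have hRp := pow_pos hR01.1 p
  exact mul_left_cancel₀ hRp.ne' (mul_left_cancel₀ (by positivity) hR)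

lemma adm_linear (hlam : 0 < lam) : Adm lam (fun R => lam * R) (fun _ => lam) where
  intg := by simp
  ftc := fun R hR => by simp [hR.1, mul_comm]
  derivPos := Eventually.of_forall fun _ => hlam
  bc := by simp
  c0 := by simp

lemma densityEnergy_del_linear_ne_top (hlam : 0 < lam) :
    densityEnergy (radialMeasure p) (p + 1) (lam ^ (p + 1)) (radialIntegrand p κ h)
      (del (p + 1) (fun R => lam * R) fun _ => lam) ≠ ∞ := by
  have hcont : Continuous fun R : ℝ => R ^ p * PhiHat (p + 1) κ h lam lam -
      cavityTermDeriv p κ (lam * R) * lam :=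
    ((continuous_pow p).mul continuous_const).sub
      ((continuous_cavityTermDeriv.comp (continuous_const_mul lam)).mul continuous_const)
  rw [densityEnergy, lintegral_radialMeasure]
  refine ne_of_eq_of_ne (setLIntegral_congr_fun measurableSet_Ioc fun R hR => ?_)
    (hcont.integrableOn_Ioc (a := 0) (b := 1) (μ := volume)).lintegral_lt_top.ne
  have hΦ := (adm_linear hlam).pow_mul_PhiHat_eq (p := p) (κ := κ) (h := h) hR
  rw [mul_div_cancel_right₀ lam hR.1.ne'] at hΦ
  simp only [hΦ, add_sub_cancel_right]

end Reduction

theorem stmt10_general (n : ℕ) (hn : 1 ≤ n) (κ : ℝ) (hκ : 0 ≤ κ)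
    (h : ℝ → ℝ) (hh : VolumetricGrowth h) (hconv : ConvexOn ℝ (Ioi 0) h)
    (lam : ℝ) (hlam : 0 < lam) :
    ∃ rs rs' : ℝ → ℝ, Adm lam rs rs' ∧
      (∀ r r' : ℝ → ℝ, Adm lam r r' → IHatE n κ lam h rs rs' ≤ IHatE n κ lam h r r') ∧
      ∃ m : ℝ, IHatE n κ lam h rs rs' = (m : EReal) := by
  obtain ⟨p, rfl⟩ := Nat.exists_eq_add_of_le' hn
  obtain ⟨F, hF, hFfin, hmin⟩ := exists_isMinOn_densityEnergy_sub (a := p + 1) hh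
    (tonelliIntegrand_radialIntegrand (p := p) hκ hconv) (by positivity)
    (continuous_cavityTerm (p := p) (κ := κ)).continuousOn
    ⟨_, (adm_linear hlam).admissibleDensity, densityEnergy_del_linear_ne_top hlam⟩
  obtain ⟨rs, rs', hrs, hdel⟩ := hF.exists_adm hlam
  have hvalue := hrs.IHatE_eq (p := p) hκ hconv hh.nonneg
  rw [densityEnergy_congr hdel, baseValue_congr hdel] at hvalue
  refine ⟨rs, rs', hrs, fun r r' hr => ?_, ?_⟩
  · rw [hvalue, hr.IHatE_eq hκ hconv hh.nonneg]
    exact hmin hr.admissibleDensity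
  · rw [hvalue, ← EReal.coe_ennreal_toReal hFfin, ← EReal.coe_sub]
    exact ⟨_, rfl⟩

/-- the modified functional `Î` attains its infimum over `𝒜_λ`, and
the infimum is a real number. -/
theorem stmt10 (n : ℕ) (hn : 2 ≤ n) (κ : ℝ) (hκ : 0 < κ)
    (h h' h'' : ℝ → ℝ) (hh : GoodH h h' h'') (hconv : ConvexOn ℝ (Set.Ioi 0) h)
    (lam : ℝ) (hlam : 0 < lam) :
    ∃ rs rs' : ℝ → ℝ, Adm lam rs rs' ∧
      (∀ r r' : ℝ → ℝ, Adm lam r r' → IHatE n κ lam h rs rs' ≤ IHatE n κ lam h r r') ∧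
      ∃ m : ℝ, IHatE n κ lam h rs rs' = (m : EReal) :=
  stmt10_general n (by omega) κ hκ.le h ⟨hh.nonneg, hh.lim_zero, hh.lim_growth⟩ hconv lam hlam

end
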